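/- arXiv:2108.04765 — 3 statements merged into one kernel-verified Lean document; each statement's English description precedes it below -/
import Mathlib

section
/- (Continuum rewriting of the discrete multipole expansion.) Suppose the lattice operator H is stable and admits a lattice Green's function 𝒢, and let (G_n) be kernels with the properties of the Green's-function expansion. Let p ≥ 1, let 𝒮 ⊂ Λ be a lattice basis, and let b^{(i,k)} ∈ (ℝ^𝒮)^{⊙i} be symmetric arrays for 0 ≤ i ≤ p−1 and 1 ≤ k ≤ N. Then there exist symmetric tensors a^{(i,n,k)} ∈ (ℝ^d)^{⊗i} such that the function w^{MP} := ∑_{i=0}^{p−1}∑_{k=1}^{N} b^{(i,k)} : D_𝒮^i 𝒢_k − ∑_{k=1}^{N}∑_{n=0}^{⌊(p−1)/2⌋}∑_{i=0}^{p−1−2n} a^{(i,n,k)} : ∇^i(G_n e_k)|_Λ (continuum terms set to 0 at ℓ = 0) satisfies, for every j ∈ ℕ₀, |D^j w^{MP}(ℓ)| ≤ C_j⟨ℓ⟩^{2−d−j−p} for all ℓ ∈ Λ. -/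
noncomputable section

open scoped BigOperators
open MeasureTheory Filter Topology

namespace Defect

abbrev Vec (n : ℕ) : Type := Fin n → ℝ

/-- Euclidean norm of a vector in `ℝ^n`. -/
def enorm {n : ℕ} (v : Vec n) : ℝ := Real.sqrt (∑ i, (v i) ^ 2)

/-- `⟨x⟩ := |x| + 2`. -/
def ang {n : ℕ} (v : Vec n) : ℝ := enorm v + 2

def dotV {n : ℕ} (x y : Vec n) : ℝ := ∑ i, x i * y i

/-- Matrix-vector product for a plain `Fin N → Fin N → ℝ` matrix. -/
def mulV {N : ℕ} (M : Fin N → Fin N → ℝ) (v : Vec N) : Vec N := fun i => ∑ j, M i j * v j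

/-- Euclidean (Frobenius) norm of an `N × N` array. -/
def mnorm {N : ℕ} (M : Fin N → Fin N → ℝ) : ℝ := Real.sqrt (∑ i, ∑ j, (M i j) ^ 2)

/-- The lattice point `A z` for `z ∈ ℤ^d`. -/
def latticePt (d : ℕ) (A : Matrix (Fin d) (Fin d) ℝ) (z : Fin d → ℤ) : Vec d :=
  fun i => ∑ j, A i j * (z j : ℝ)

/-- The Bravais lattice `Λ = A ℤ^d`. -/
def Lattice (d : ℕ) (A : Matrix (Fin d) (Fin d) ℝ) : Set (Vec d) :=
  Set.range (latticePt d A)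

/-- First-order finite difference `D_ρ u (ℓ) = u(ℓ+ρ) - u(ℓ)`. -/
def D1 {d : ℕ} {M : Type} [AddCommGroup M] (ρ : Vec d) (u : Vec d → M) (ℓ : Vec d) : M :=
  u (ℓ + ρ) - u ℓ

/-- Iterated finite difference `D_{ρ₁} ⋯ D_{ρ_j} u (ℓ)` (closed form). -/
def Dmulti {d : ℕ} {M : Type} [AddCommGroup M] [Module ℝ M] {j : ℕ}
    (ρs : Fin j → Vec d) (u : Vec d → M) (ℓ : Vec d) : M :=
  ∑ S : Finset (Fin j), ((-1 : ℝ) ^ (j - S.card)) • u (ℓ + ∑ i ∈ S, ρs i)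

/-- `|Du(ℓ)|²`, the squared Euclidean norm of the stencil of first differences. -/
def Dnorm1Sq {d N : ℕ} (R : Finset (Vec d)) (u : Vec d → Vec N) (ℓ : Vec d) : ℝ :=
  ∑ ρ ∈ R, (enorm (D1 ρ u ℓ)) ^ 2

/-- `|D^j u(ℓ)|`, the Euclidean norm of the array `(D_{ρ⃗} u(ℓ))_{ρ⃗ ∈ R^j}`. -/
def DnormJ {d N : ℕ} (R : Finset (Vec d)) (j : ℕ) (u : Vec d → Vec N) (ℓ : Vec d) : ℝ :=
  Real.sqrt (∑ ρs : Fin j → {x // x ∈ R},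
    (enorm (Dmulti (fun i => (ρs i : Vec d)) u ℓ)) ^ 2)

/-- The linearized lattice operator
`H[u](ℓ) = ∑_{σ,ρ∈R} (C_{σρ} D_ρ u(ℓ-σ) - C_{σρ} D_ρ u(ℓ))`. -/
def Hop (d N : ℕ) (R : Finset (Vec d)) (C : Vec d → Vec d → Fin N → Fin N → ℝ)
    (u : Vec d → Vec N) (ℓ : Vec d) : Vec N :=
  ∑ σ ∈ R, ∑ ρ ∈ R, (mulV (C σ ρ) (D1 ρ u (ℓ - σ)) - mulV (C σ ρ) (D1 ρ u ℓ))

/-- `u ∈ 𝓗¹`. -/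
def InH1 {d N : ℕ} (A : Matrix (Fin d) (Fin d) ℝ) (R : Finset (Vec d))
    (u : Vec d → Vec N) : Prop :=
  Summable fun z : Fin d → ℤ => Dnorm1Sq R u (latticePt d A z)

/-- `u ∈ 𝓗ᶜ` : the stencil `Du` has bounded support on the lattice. -/
def InHc {d N : ℕ} (A : Matrix (Fin d) (Fin d) ℝ) (R : Finset (Vec d))
    (u : Vec d → Vec N) : Prop :=
  ∃ rad : ℝ, ∀ z : Fin d → ℤ, rad ≤ enorm (latticePt d A z) →
    ∀ ρ ∈ R, D1 ρ u (latticePt d A z) = 0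

/-- Stability of the lattice operator `H`. -/
def IsStable (d N : ℕ) (A : Matrix (Fin d) (Fin d) ℝ) (R : Finset (Vec d))
    (C : Vec d → Vec d → Fin N → Fin N → ℝ) : Prop :=
  ∃ c₀ : ℝ, 0 < c₀ ∧ ∀ u : Vec d → Vec N, InHc A R u →
    c₀ * (∑' z : Fin d → ℤ, Dnorm1Sq R u (latticePt d A z)) ≤
      ∑' z : Fin d → ℤ, ∑ σ ∈ R, ∑ ρ ∈ R,
        dotV (D1 σ u (latticePt d A z)) (mulV (C σ ρ) (D1 ρ u (latticePt d A z)))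

/-- `k`-th column of a matrix-valued function. -/
def col {d N : ℕ} (G : Vec d → Fin N → Fin N → ℝ) (k : Fin N) : Vec d → Vec N :=
  fun x i => G x i k

/-- `|D^j 𝒢(ℓ)|` for matrix-valued `𝒢`. -/
def DnormJmat {d N : ℕ} (R : Finset (Vec d)) (j : ℕ)
    (G : Vec d → Fin N → Fin N → ℝ) (ℓ : Vec d) : ℝ :=
  Real.sqrt (∑ k : Fin N, (DnormJ R j (col G k) ℓ) ^ 2)

/-- `𝒢` is a lattice Green's function for `H`. -/
def IsLatticeGreen (d N : ℕ) (A : Matrix (Fin d) (Fin d) ℝ) (R : Finset (Vec d))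
    (C : Vec d → Vec d → Fin N → Fin N → ℝ) (G : Vec d → Fin N → Fin N → ℝ) : Prop :=
  (∀ (k : Fin N) (z : Fin d → ℤ),
      Hop d N R C (col G k) (latticePt d A z) =
        if latticePt d A z = 0 then Pi.single k 1 else 0) ∧
  (∀ j : ℕ, 1 ≤ j → ∃ cj : ℝ, ∀ z : Fin d → ℤ,
      DnormJmat R j G (latticePt d A z) ≤
        cj * ang (latticePt d A z) ^ ((2 : ℝ) - d - j))

/-- A symmetric array `b ∈ (ℝ^{Fin d})^{⊙ i}`. -/
def SymArr {d i : ℕ} (b : (Fin i → Fin d) → ℝ) : Prop :=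
  ∀ (π : Equiv.Perm (Fin i)) (σv : Fin i → Fin d), b (σv ∘ π) = b σv

/-- `b : D_𝒮^i f`, a multipole term built from the basis `s`. -/
def multipole (d N : ℕ) (s : Fin d → Vec d) (i : ℕ) (b : (Fin i → Fin d) → ℝ)
    (f : Vec d → Vec N) : Vec d → Vec N :=
  fun ℓ => ∑ σv : Fin i → Fin d, b σv • Dmulti (fun m => s (σv m)) f ℓ

/-- Iterated partial derivative `∂_{j₁} ⋯ ∂_{j_i} f (x)`. -/
def pderivMulti {d : ℕ} (i : ℕ) (js : Fin i → Fin d) (f : Vec d → ℝ) (x : Vec d) : ℝ :=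
  iteratedFDeriv ℝ i f x (fun m => Pi.single (js m) (1 : ℝ))

/-- `a : ∇^i f (x)` for a tensor `a ∈ (ℝ^d)^{⊗ i}`. -/
def aContract {d : ℕ} (i : ℕ) (a : (Fin i → Fin d) → ℝ) (f : Vec d → ℝ) (x : Vec d) : ℝ :=
  ∑ js : Fin i → Fin d, a js * pderivMulti i js f x

/-- Elementary tensor `σ⃗^⊗` as an array. -/
def tensorPow {d k : ℕ} (σs : Fin k → Vec d) : (Fin k → Fin d) → ℝ :=
  fun js => ∏ m, σs m (js m)

/-- Symmetric tensor product `σ⃗^⊙`. -/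
def symTensor {d k : ℕ} (σs : Fin k → Vec d) : (Fin k → Fin d) → ℝ :=
  fun js => ((k.factorial : ℝ))⁻¹ * ∑ π : Equiv.Perm (Fin k), tensorPow (σs ∘ π) js

/-- A symmetric tensor (array invariant under index permutations). -/
def SymTensor {d k : ℕ} (T : (Fin k → Fin d) → ℝ) : Prop :=
  ∀ (π : Equiv.Perm (Fin k)) (js : Fin k → Fin d), T (js ∘ π) = T js

/-- `∂V/∂g_ρ (gs)` as a vector in `ℝ^N`. -/
def gradV {d N : ℕ} (R : Finset (Vec d)) (V : ({x // x ∈ R} → Vec N) → ℝ)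
    (ρ : {x // x ∈ R}) (gs : {x // x ∈ R} → Vec N) : Vec N :=
  fun i => fderiv ℝ V gs (Pi.single ρ (Pi.single i 1))

/-- The finite-difference stencil `Du(ℓ) = (D_ρ u(ℓ))_{ρ ∈ R}`. -/
def Dstencil {d N : ℕ} (R : Finset (Vec d)) (u : Vec d → Vec N) (ℓ : Vec d) :
    {x // x ∈ R} → Vec N :=
  fun ρ => D1 (ρ : Vec d) u ℓ

/-- `C_{σρ} = ∂²V/∂g_σ ∂g_ρ (0)`. -/
def CofV {d N : ℕ} (R : Finset (Vec d)) (V : ({x // x ∈ R} → Vec N) → ℝ)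
    (σ ρ : Vec d) (i j : Fin N) : ℝ :=
  if hσ : σ ∈ R then
    if hρ : ρ ∈ R then
      iteratedFDeriv ℝ 2 V 0
        ![Pi.single ⟨σ, hσ⟩ (Pi.single i 1), Pi.single ⟨ρ, hρ⟩ (Pi.single j 1)]
    else 0
  else 0

/-- Summand of the first variation `δE(u)[v]` at a site. -/
def deltaEsite {d N : ℕ} (R : Finset (Vec d)) (V : ({x // x ∈ R} → Vec N) → ℝ)
    (u v : Vec d → Vec N) (ℓ : Vec d) : ℝ :=
  ∑ ρ ∈ R.attach, dotV (gradV R V ρ (Dstencil R u ℓ)) (D1 (ρ : Vec d) v ℓ)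

/-- The pointwise atomistic force `δE(u)(ℓ)`. -/
def deltaEpt {d N : ℕ} (R : Finset (Vec d)) (V : ({x // x ∈ R} → Vec N) → ℝ)
    (u : Vec d → Vec N) (ℓ : Vec d) : Vec N :=
  ∑ ρ ∈ R.attach,
    (gradV R V ρ (Dstencil R u (ℓ - (ρ : Vec d))) - gradV R V ρ (Dstencil R u ℓ))

/-- Point symmetry of the site potential. -/
def PointSym {d N : ℕ} (R : Finset (Vec d)) (hRsym : ∀ ρ ∈ R, -ρ ∈ R)
    (V : ({x // x ∈ R} → Vec N) → ℝ) : Prop :=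
  ∀ gs : {x // x ∈ R} → Vec N,
    V (fun ρ => -(gs ⟨-(ρ : Vec d), hRsym _ ρ.2⟩)) = V gs

/-- The Cauchy–Born elasticity tensor `ℂ_{iajb}`. -/
def CB {d N : ℕ} (A : Matrix (Fin d) (Fin d) ℝ) (R : Finset (Vec d))
    (C : Vec d → Vec d → Fin N → Fin N → ℝ)
    (i : Fin N) (a : Fin d) (j : Fin N) (b : Fin d) : ℝ :=
  (|A.det|)⁻¹ * ∑ ρ ∈ R, ∑ σ ∈ R, C ρ σ i j * ρ a * σ b

/-- Positive homogeneity of degree `deg` (away from the origin). -/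
def PosHomMat {d N : ℕ} (f : Vec d → Fin N → Fin N → ℝ) (deg : ℝ) : Prop :=
  ∀ t : ℝ, 0 < t → ∀ x : Vec d, x ≠ 0 → ∀ i k, f (t • x) i k = t ^ deg * f x i k

/-- The defining properties of the continuum kernel family `(G_n)`. -/
def KernelFamily (d N : ℕ) (A : Matrix (Fin d) (Fin d) ℝ) (R : Finset (Vec d))
    (G : Vec d → Fin N → Fin N → ℝ) (Gn : ℕ → Vec d → Fin N → Fin N → ℝ) : Prop :=
  (∀ n : ℕ, ContDiffOn ℝ (⊤ : ℕ∞) (Gn n) {x : Vec d | x ≠ 0}) ∧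
  (∀ n : ℕ, 1 ≤ n ∨ 3 ≤ d →
      PosHomMat (Gn n) ((2 : ℝ) - 2 * n - d)) ∧
  (d = 2 → ∃ (M : Fin N → Fin N → ℝ) (φ : Vec d → Fin N → Fin N → ℝ),
      ContDiffOn ℝ (⊤ : ℕ∞) φ {x : Vec d | x ≠ 0} ∧ PosHomMat φ 0 ∧
      ∀ x : Vec d, x ≠ 0 → ∀ i k,
        Gn 0 x i k = M i k * Real.log (enorm x) + φ x i k) ∧
  (∀ j p : ℕ, ∃ Cjp : ℝ, ∀ (ρs : Fin j → {x // x ∈ R}) (z : Fin d → ℤ),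
      (∀ S : Finset (Fin j), latticePt d A z + ∑ i ∈ S, (ρs i : Vec d) ≠ 0) →
      mnorm (Dmulti (fun m => (ρs m : Vec d))
          (fun x i k => G x i k - ∑ n ∈ Finset.range (p + 1), Gn n x i k)
          (latticePt d A z)) ≤
        Cjp * ang (latticePt d A z) ^ (-(2 : ℝ) * p - d - j))

/-! Each term of the discrete multipole expansion is a finite combination of translates `𝒢(· + τ)`
with `τ` in the lattice, so it suffices to expand a single translate. Up to an error of order
`2 - d - p`, the function `𝒢` may be replaced by the kernels `G_n` with `n ≤ (p - 1) / 2`, and each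
`G_n(· + τ)` may be replaced by its Taylor polynomial of degree `p - 2n - 1`. The Taylor remainders
only involve derivatives of positive order, which are homogeneous even for the logarithmic kernel:
scaling the argument of a logarithm adds a constant. Since differences commute with taking Taylor
remainders and lower the order of a kernel by one, the errors are controlled together with all of
their differences. -/

section AtInfinity

open Asymptotics Bornology Metric
open scoped ContDiff Nat fwdDiff

variable {E F : Type*} [NormedAddCommGroup E] [NormedAddCommGroup F]

theorem eventually_cobounded_forall_closedBall {P : E → Prop}
    (hP : ∀ᶠ x in cobounded E, P x) (r : ℝ) :
    ∀ᶠ x in cobounded E, ∀ y ∈ closedBall x r, P y := by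
  rw [hasBasis_cobounded_norm.eventually_iff] at hP ⊢
  obtain ⟨a, -, ha⟩ := hP
  refine ⟨a + r, trivial, fun x hx y hy => ha ?_⟩
  have hxy := norm_sub_norm_le x y
  have hyx := mem_closedBall_iff_norm'.mp hy
  simp only [Set.mem_ofPred_eq] at hx ⊢
  linarith

theorem rpow_le_two_rpow_abs_mul_rpow {a b : ℝ} (ha : 0 < a) (hab : a ≤ 2 * b) (hba : b ≤ 2 * a)
    (e : ℝ) : b ^ e ≤ 2 ^ |e| * a ^ e := by
  have hb : 0 < b := by linarith
  rcases le_total 0 e with he | he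
  · rw [abs_of_nonneg he, ← Real.mul_rpow zero_le_two ha.le]
    exact Real.rpow_le_rpow hb.le hba he
  · rw [abs_of_nonpos he, Real.rpow_neg zero_le_two, ← Real.inv_rpow zero_le_two,
      ← Real.mul_rpow (by norm_num) ha.le]
    exact Real.rpow_le_rpow_of_nonpos (by positivity) (by linarith) he

theorem exists_eventually_forall_closedBall_norm_le {f : E → F} {e : ℝ}
    (hf : f =O[cobounded E] fun x => ‖x‖ ^ e) (r : ℝ) :
    ∃ C, ∀ᶠ x in cobounded E, ∀ y ∈ closedBall x r, ‖f y‖ ≤ C * ‖x‖ ^ e := by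
  obtain ⟨C, hC, hfC⟩ := hf.exists_pos
  refine ⟨C * 2 ^ |e|, ?_⟩
  filter_upwards [eventually_cobounded_forall_closedBall hfC.bound r,
    eventually_cobounded_le_norm (2 * r), eventually_cobounded_le_norm (1 : ℝ)]
    with x hx hxr hx1 y hy
  have hxy : |‖x‖ - ‖y‖| ≤ r := (abs_norm_sub_norm_le x y).trans (mem_closedBall_iff_norm'.mp hy)
  obtain ⟨hyx, hxy⟩ := abs_le.mp hxy
  calc
    ‖f y‖ ≤ C * ‖y‖ ^ e := by
      simpa only [Real.norm_of_nonneg (Real.rpow_nonneg (norm_nonneg y) e)] using hx y hy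
    _ ≤ C * (2 ^ |e| * ‖x‖ ^ e) := by
      gcongr
      exact rpow_le_two_rpow_abs_mul_rpow (by linarith) (by linarith) (by linarith) e
    _ = C * 2 ^ |e| * ‖x‖ ^ e := (mul_assoc ..).symm

variable [NormedSpace ℝ E] [NormedSpace ℝ F]

/-- The remainder `f (x + τ) - ∑_{i < P} (τ · ∇)^i f (x) / i!` of the Taylor expansion of a
translate. -/
def taylorRemainder (P : ℕ) (τ : E) (f : E → F) (x : E) : F :=
  f (x + τ) - ∑ i ∈ Finset.range P, (i ! : ℝ)⁻¹ • iteratedFDeriv ℝ i f x fun _ => τ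

theorem norm_taylorRemainder_succ_le [CompleteSpace F] {f : E → F} {x τ : E} {n : ℕ} {B : ℝ}
    (hf : ∀ y ∈ closedBall x ‖τ‖, ContDiffAt ℝ (n + 1) f y)
    (hB : ∀ y ∈ closedBall x ‖τ‖, ‖iteratedFDeriv ℝ (n + 1) f y‖ ≤ B) :
    ‖taylorRemainder (n + 1) τ f x‖ ≤ (n ! : ℝ)⁻¹ * (B * ‖τ‖ ^ (n + 1)) := by
  have hseg : ∀ t ∈ Set.Icc (0 : ℝ) 1, x + t • τ ∈ closedBall x ‖τ‖ := fun t ht => by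
    rw [mem_closedBall_iff_norm, add_sub_cancel_left, norm_smul, Real.norm_of_nonneg ht.1]
    exact mul_le_of_le_one_left (norm_nonneg τ) ht.2
  have hτ := map_add_eq_sum_add_integral_iteratedFDeriv fun t ht => hf _ (hseg t ht)
  rw [taylorRemainder, hτ, add_sub_cancel_left, norm_smul, norm_inv, Real.norm_natCast]
  gcongr
  refine (intervalIntegral.norm_integral_le_of_norm_le_const fun t ht => ?_).trans_eq
    (by rw [sub_zero, abs_one, mul_one])
  rw [Set.uIoc_of_le zero_le_one] at ht
  have ht01 : 0 ≤ 1 - t ∧ 1 - t ≤ 1 := ⟨by linarith [ht.2], by linarith [ht.1]⟩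
  calc
    ‖(1 - t) ^ n • iteratedFDeriv ℝ (n + 1) f (x + t • τ) fun _ => τ‖
        ≤ 1 * ‖iteratedFDeriv ℝ (n + 1) f (x + t • τ) fun _ => τ‖ := by
      rw [norm_smul, Real.norm_of_nonneg (pow_nonneg ht01.1 n)]
      gcongr
      exact pow_le_one₀ ht01.1 ht01.2
    _ ≤ B * ‖τ‖ ^ (n + 1) := by
      rw [one_mul]
      refine (ContinuousMultilinearMap.le_opNorm_mul_pow_of_le _ (m := fun _ => τ)
        (pi_norm_const_le τ)).trans ?_
      gcongr
      exact hB _ (hseg t ⟨ht.1.le, ht.2⟩)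

/-- Smooth functions near infinity whose derivatives of order `k ≥ 1` are `O(‖x‖ ^ (m - k))`, as
for symbols of order `m`. The function itself is not bounded, so that logarithms belong to the
class with `m = 0`. -/
structure IsSymbolModConst (f : E → F) (m : ℝ) : Prop where
  contDiffAt : ∀ᶠ x in cobounded E, ContDiffAt ℝ ∞ f x
  isBigO : ∀ k ≠ 0, iteratedFDeriv ℝ k f =O[cobounded E] fun x => ‖x‖ ^ (m - k)

theorem IsSymbolModConst.taylorRemainder_isBigO [CompleteSpace F] {f : E → F} {m : ℝ}
    (hf : IsSymbolModConst f m) {P : ℕ} (hP : P ≠ 0) (τ : E) :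
    taylorRemainder P τ f =O[cobounded E] fun x => ‖x‖ ^ (m - P) := by
  obtain ⟨n, rfl⟩ := Nat.exists_eq_succ_of_ne_zero hP
  obtain ⟨C, hC⟩ := exists_eventually_forall_closedBall_norm_le (hf.isBigO _ hP) ‖τ‖
  refine IsBigO.of_bound ((n ! : ℝ)⁻¹ * (C * ‖τ‖ ^ (n + 1))) ?_
  filter_upwards [hC, eventually_cobounded_forall_closedBall hf.contDiffAt ‖τ‖] with x hxC hx
  have hxf : ∀ y ∈ closedBall x ‖τ‖, ContDiffAt ℝ (n + 1) f y := fun y hy =>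
    (hx y hy).of_le (mod_cast le_top)
  refine (norm_taylorRemainder_succ_le hxf hxC).trans_eq ?_
  rw [Real.norm_of_nonneg (Real.rpow_nonneg (norm_nonneg x) _)]
  ring

theorem iteratedFDeriv_fwdDiff {f : E → F} {x ρ : E} {k : ℕ} (hx : ContDiffAt ℝ k f x)
    (hxρ : ContDiffAt ℝ k f (x + ρ)) :
    iteratedFDeriv ℝ k (Δ_[ρ] f) x = Δ_[ρ] (iteratedFDeriv ℝ k f) x := by
  have hshift : ContDiffAt ℝ k (fun y => f (y + ρ)) x :=
    ContDiffAt.comp x hxρ (contDiffAt_id.add contDiffAt_const)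
  rw [fwdDiff, ← iteratedFDeriv_comp_add_right]
  exact iteratedFDeriv_sub_apply hshift hx

theorem IsSymbolModConst.eventually_iteratedFDeriv_fwdDiff {f : E → F} {m : ℝ}
    (hf : IsSymbolModConst f m) (ρ : E) :
    ∀ᶠ x in cobounded E, ∀ k : ℕ,
      iteratedFDeriv ℝ k (Δ_[ρ] f) x = Δ_[ρ] (iteratedFDeriv ℝ k f) x := by
  filter_upwards [eventually_cobounded_forall_closedBall hf.contDiffAt ‖ρ‖] with x hx k
  have hx₀ := hx x (mem_closedBall_self (norm_nonneg ρ))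
  have hxρ := hx (x + ρ) (by simp)
  exact iteratedFDeriv_fwdDiff (hx₀.of_le (mod_cast le_top)) (hxρ.of_le (mod_cast le_top))

theorem IsSymbolModConst.fwdDiff_iteratedFDeriv_isBigO {f : E → F} {m : ℝ}
    (hf : IsSymbolModConst f m) (ρ : E) (k : ℕ) :
    Δ_[ρ] (iteratedFDeriv ℝ k f) =O[cobounded E] fun x => ‖x‖ ^ (m - (k + 1 : ℕ)) := by
  obtain ⟨C, hC⟩ := exists_eventually_forall_closedBall_norm_le (hf.isBigO _ k.succ_ne_zero) ‖ρ‖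
  refine IsBigO.of_bound (C * ‖ρ‖) ?_
  filter_upwards [hC, eventually_cobounded_forall_closedBall hf.contDiffAt ‖ρ‖] with x hxC hx
  have hdiff : ∀ y ∈ closedBall x ‖ρ‖, DifferentiableAt ℝ (iteratedFDeriv ℝ k f) y :=
    fun y hy => (hx y hy).differentiableAt_iteratedFDeriv (mod_cast WithTop.coe_lt_top k)
  refine ((convex_closedBall x ‖ρ‖).norm_image_sub_le_of_norm_fderiv_le (y := x + ρ) hdiff
    (fun y hy => norm_fderiv_iteratedFDeriv.trans_le (hxC y hy))
    (mem_closedBall_self (norm_nonneg ρ)) (by simp)).trans_eq ?_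
  rw [add_sub_cancel_left, Real.norm_of_nonneg (Real.rpow_nonneg (norm_nonneg x) _)]
  ring

theorem IsSymbolModConst.fwdDiff {f : E → F} {m : ℝ} (hf : IsSymbolModConst f m) (ρ : E) :
    IsSymbolModConst (Δ_[ρ] f) (m - 1) where
  contDiffAt := by
    filter_upwards [eventually_cobounded_forall_closedBall hf.contDiffAt ‖ρ‖] with x hx
    have hxρ : ContDiffAt ℝ ∞ f (x + ρ) := hx _ (by simp)
    exact (ContDiffAt.comp x hxρ (contDiffAt_id.add contDiffAt_const)).sub
      (hx x (mem_closedBall_self (norm_nonneg ρ)))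
  isBigO k _ := by
    have hcomm : iteratedFDeriv ℝ k (Δ_[ρ] f) =ᶠ[cobounded E] Δ_[ρ] (iteratedFDeriv ℝ k f) :=
      (hf.eventually_iteratedFDeriv_fwdDiff ρ).mono fun x hx => hx k
    refine hcomm.trans_isBigO ((hf.fwdDiff_iteratedFDeriv_isBigO ρ k).congr_right fun x => ?_)
    push_cast
    ring_nf

theorem IsSymbolModConst.taylorRemainder_fwdDiff {f : E → F} {m : ℝ}
    (hf : IsSymbolModConst f m) (P : ℕ) (τ ρ : E) :
    taylorRemainder P τ (Δ_[ρ] f) =ᶠ[cobounded E] Δ_[ρ] (taylorRemainder P τ f) := by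
  filter_upwards [hf.eventually_iteratedFDeriv_fwdDiff ρ] with x hx
  simp only [taylorRemainder, hx, _root_.fwdDiff, sub_apply, smul_sub,
    Finset.sum_sub_distrib, add_right_comm x τ ρ]
  abel

theorem iteratedFDeriv_comp_const_smul_of_ne_zero {t : ℝ} (ht : t ≠ 0) (f : E → F) (x : E)
    (k : ℕ) :
    iteratedFDeriv ℝ k (fun y => f (t • y)) x = t ^ k • iteratedFDeriv ℝ k f (t • x) := by
  have hcomp := (ContinuousLinearEquiv.smulLeft (Units.mk0 t ht) :
    E ≃L[ℝ] E).iteratedFDerivWithin_comp_right f uniqueDiffOn_univ (x := x) trivial k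
  simp only [Set.preimage_univ, iteratedFDerivWithin_univ] at hcomp
  refine hcomp.trans (ContinuousMultilinearMap.ext fun v => ?_)
  simpa using ContinuousMultilinearMap.map_smul_univ _ (fun _ => t) v

theorem iteratedFDeriv_smul_of_map_smul {f : E → F} {m : ℝ} {c : ℝ → F}
    (hf : ContDiffOn ℝ ∞ f {x | x ≠ 0})
    (hmap : ∀ t : ℝ, 0 < t → ∀ x ≠ 0, f (t • x) = t ^ m • f x + c t)
    {k : ℕ} (hk : k ≠ 0) {t : ℝ} (ht : 0 < t) {x : E} (hx : x ≠ 0) :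
    iteratedFDeriv ℝ k f (t • x) = t ^ (m - k) • iteratedFDeriv ℝ k f x := by
  have hfx : ContDiffAt ℝ k f x :=
    (hf.contDiffAt (isOpen_ne.mem_nhds hx)).of_le (mod_cast le_top)
  have hscale : (fun y => f (t • y)) =ᶠ[𝓝 x] t ^ m • f + fun _ => c t := by
    filter_upwards [isOpen_ne.mem_nhds hx] with y hy using hmap t ht y hy
  have hmul : ContDiffAt ℝ k (t ^ m • f) x := hfx.const_smul _
  have hderiv : t ^ k • iteratedFDeriv ℝ k f (t • x) = t ^ m • iteratedFDeriv ℝ k f x := by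
    rw [← iteratedFDeriv_comp_const_smul_of_ne_zero ht.ne', (hscale.iteratedFDeriv ℝ k).eq_of_nhds,
      iteratedFDeriv_add_apply hmul contDiffAt_const,
      iteratedFDeriv_const_of_ne hk, Pi.zero_apply, add_zero, iteratedFDeriv_const_smul_apply hfx]
  rw [Real.rpow_sub ht, Real.rpow_natCast, div_eq_inv_mul, mul_smul, ← hderiv,
    inv_smul_smul₀ (pow_ne_zero k ht.ne')]

/-- Differentiating the scaling relation in `x` removes the additive term `c t`, so that the
derivatives of `f` are homogeneous and are controlled by their values on the unit sphere. -/
theorem isSymbolModConst_of_map_smul [ProperSpace E] {f : E → F} {m : ℝ} {c : ℝ → F}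
    (hf : ContDiffOn ℝ ∞ f {x | x ≠ 0})
    (hmap : ∀ t : ℝ, 0 < t → ∀ x ≠ 0, f (t • x) = t ^ m • f x + c t) :
    IsSymbolModConst f m where
  contDiffAt := (eventually_ne_cobounded 0).mono fun _ hx => hf.contDiffAt (isOpen_ne.mem_nhds hx)
  isBigO k hk := by
    have hcont : ContinuousOn (iteratedFDeriv ℝ k f) (sphere 0 1) := fun x hx => by
      have hfx := hf.contDiffAt (isOpen_ne.mem_nhds (ne_zero_of_mem_unit_sphere ⟨x, hx⟩))
      exact (hfx.iteratedFDeriv_right (m := 0) (mod_cast le_top)).continuousAt.continuousWithinAt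
    obtain ⟨C, hC⟩ := (isCompact_sphere (0 : E) 1).exists_bound_of_continuousOn hcont
    refine IsBigO.of_bound C ?_
    filter_upwards [eventually_ne_cobounded (0 : E)] with x hx
    have hxpos : 0 < ‖x‖ := norm_pos_iff.mpr hx
    have hunit : ‖x‖⁻¹ • x ∈ sphere (0 : E) 1 := by simp [norm_smul, hxpos.ne']
    have hhom := iteratedFDeriv_smul_of_map_smul hf hmap hk hxpos
      (ne_zero_of_mem_unit_sphere ⟨_, hunit⟩)
    rw [smul_inv_smul₀ hxpos.ne'] at hhom
    rw [hhom, norm_smul, mul_comm C]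
    gcongr
    exact hC _ hunit

end AtInfinity

section IteratedDifference

open Asymptotics Bornology
open scoped fwdDiff

variable {d j : ℕ} {M : Type}

theorem sum_finset_fin_succ [AddCommMonoid M] (f : Finset (Fin (j + 1)) → M) :
    ∑ S, f S = ∑ S : Finset (Fin j), (f (insert 0 (S.image Fin.succ)) + f (S.image Fin.succ)) := by
  have hinj : Function.Injective fun S : Finset (Fin j) => S.image Fin.succ :=
    Finset.image_injective (Fin.succ_injective j)
  have huniv : (Finset.univ : Finset (Finset (Fin (j + 1)))) =
      (insert 0 (Finset.univ.image Fin.succ)).powerset := by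
    rw [← Finset.powerset_univ, Fin.univ_succ, Finset.cons_eq_insert, Finset.map_eq_image,
      Function.Embedding.coeFn_mk]
  rw [huniv, Finset.sum_powerset_insert (by simp), Finset.powerset_image,
    Finset.sum_image hinj.injOn, Finset.sum_image hinj.injOn, Finset.powerset_univ,
    Finset.sum_add_distrib, add_comm]

section Algebra

variable [AddCommGroup M] [Module ℝ M]

theorem Dmulti_zero (ρs : Fin 0 → Vec d) (u : Vec d → M) : Dmulti ρs u = u := by
  funext x
  simp [Dmulti, Subsingleton.elim (default : Finset (Fin 0)) ∅]

theorem Dmulti_succ (ρs : Fin (j + 1) → Vec d) (u : Vec d → M) :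
    Dmulti ρs u = Dmulti (Fin.tail ρs) (Δ_[ρs 0] u) := by
  funext x
  rw [Dmulti, sum_finset_fin_succ, Dmulti]
  refine Finset.sum_congr rfl fun S _ => ?_
  have hcard : (S.image Fin.succ).card = S.card :=
    Finset.card_image_of_injective S (Fin.succ_injective j)
  have hsum : ∑ i ∈ S.image Fin.succ, ρs i = ∑ i ∈ S, Fin.tail ρs i :=
    Finset.sum_image (Fin.succ_injective j).injOn
  have hsub : j + 1 - S.card = j - S.card + 1 := Nat.sub_add_comm (by simpa using S.card_le_univ)
  rw [Finset.card_insert_of_notMem (by simp), Finset.sum_insert (by simp), hcard, hsum,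
    Nat.add_sub_add_right, hsub, pow_succ, fwdDiff, smul_sub, mul_neg_one, neg_smul,
    ← sub_eq_add_neg, add_comm (ρs 0), add_assoc]

theorem Dmulti_add (ρs : Fin j → Vec d) (u v : Vec d → M) :
    Dmulti ρs (u + v) = Dmulti ρs u + Dmulti ρs v := by
  funext x
  simp only [Dmulti, Pi.add_apply, smul_add, Finset.sum_add_distrib]

theorem Dmulti_smul (ρs : Fin j → Vec d) (c : ℝ) (u : Vec d → M) :
    Dmulti ρs (c • u) = c • Dmulti ρs u := by
  funext x
  simp only [Dmulti, Pi.smul_apply, smul_comm _ c, Finset.smul_sum]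

theorem Dmulti_comp_add_right (ρs : Fin j → Vec d) (u : Vec d → M) (τ x : Vec d) :
    Dmulti ρs (fun y => u (y + τ)) x = Dmulti ρs u (x + τ) := by
  simp only [Dmulti, add_right_comm x τ]

theorem Dmulti_apply {ι : Type} (ρs : Fin j → Vec d) (u : Vec d → ι → M) (x : Vec d) (i : ι) :
    Dmulti ρs u x i = Dmulti ρs (fun y => u y i) x := by
  simp only [Dmulti, Finset.sum_apply, Pi.smul_apply]

theorem Dmulti_eventuallyEq_cobounded {u v : Vec d → M} (huv : u =ᶠ[cobounded (Vec d)] v)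
    (ρs : Fin j → Vec d) : Dmulti ρs u =ᶠ[cobounded (Vec d)] Dmulti ρs v := by
  have hshift : ∀ᶠ x in cobounded (Vec d), ∀ S : Finset (Fin j),
      u (x + ∑ i ∈ S, ρs i) = v (x + ∑ i ∈ S, ρs i) :=
    eventually_all.mpr fun S => (tendsto_add_const_cobounded _).eventually huv
  filter_upwards [hshift] with x hx
  simp only [Dmulti, hx]

end Algebra

variable [NormedAddCommGroup M] [NormedSpace ℝ M]

/-- The functions `u` with `|D^j u| = O(|x| ^ (e - j))` along the filter `l`, for every order `j`
and all differences in directions from `R`. -/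
def decayingFunctions (M : Type) [NormedAddCommGroup M] [NormedSpace ℝ M] (l : Filter (Vec d))
    (R : Set (Vec d)) (e : ℝ) : Submodule ℝ (Vec d → M) where
  carrier := {u | ∀ (j : ℕ) (ρs : Fin j → Vec d), (∀ i, ρs i ∈ R) →
    Dmulti ρs u =O[l] fun x => ‖x‖ ^ (e - j)}
  zero_mem' j ρs _ := by
    have hzero : Dmulti ρs (0 : Vec d → M) = 0 := by simpa using Dmulti_smul ρs 0 (0 : Vec d → M)
    rw [hzero]
    exact isBigO_zero _ l
  add_mem' hu hv j ρs hρs := by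
    rw [Dmulti_add]
    exact (hu j ρs hρs).add (hv j ρs hρs)
  smul_mem' c u hu j ρs hρs := by
    rw [Dmulti_smul]
    exact (hu j ρs hρs).const_smul_left c

variable {l : Filter (Vec d)} {R : Set (Vec d)} {e : ℝ}

theorem decayingFunctions_mono (hl : l ≤ cobounded (Vec d)) {e' : ℝ} (he : e ≤ e') :
    decayingFunctions M l R e ≤ decayingFunctions M l R e' := fun u hu j ρs hρs => by
  refine (hu j ρs hρs).trans (IsBigO.of_norm_eventuallyLE ?_)
  filter_upwards [hl (eventually_cobounded_le_norm 1)] with x hx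
  rw [Real.norm_of_nonneg (by positivity)]
  exact Real.rpow_le_rpow_of_exponent_le hx (by linarith)

theorem mem_decayingFunctions_of_eventuallyEq (hl : l ≤ cobounded (Vec d)) {u v : Vec d → M}
    (hu : u ∈ decayingFunctions M l R e) (huv : u =ᶠ[cobounded (Vec d)] v) :
    v ∈ decayingFunctions M l R e := fun j ρs hρs =>
  (hu j ρs hρs).congr' ((Dmulti_eventuallyEq_cobounded huv ρs).filter_mono hl) .rfl

theorem mem_decayingFunctions_pi {ι : Type} [Fintype ι] {u : Vec d → ι → M} :
    u ∈ decayingFunctions (ι → M) l R e ↔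
      ∀ i, (fun x => u x i) ∈ decayingFunctions M l R e := by
  have hD (j : ℕ) (ρs : Fin j → Vec d) : Dmulti ρs u =O[l] (fun x => ‖x‖ ^ (e - j)) ↔
      ∀ i, Dmulti ρs (fun x => u x i) =O[l] fun x => ‖x‖ ^ (e - j) := by
    rw [isBigO_pi]
    exact forall_congr' fun i => isBigO_congr (.of_forall fun x => Dmulti_apply ρs u x i) .rfl
  exact ⟨fun hu i j ρs hρs => (hD j ρs).mp (hu j ρs hρs) i,
    fun hu j ρs hρs => (hD j ρs).mpr fun i => hu i j ρs hρs⟩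

theorem comp_add_right_mem_decayingFunctions (hl : l ≤ cobounded (Vec d)) {τ : Vec d}
    (hτ : Tendsto (· + τ) l l) {u : Vec d → M} (hu : u ∈ decayingFunctions M l R e) :
    (fun x => u (x + τ)) ∈ decayingFunctions M l R e := fun j ρs hρs => by
  obtain ⟨C, hC⟩ := exists_eventually_forall_closedBall_norm_le
    (isBigO_refl (fun x : Vec d => ‖x‖ ^ (e - j)) _) ‖τ‖
  have hnorm : (fun x => ‖x + τ‖ ^ (e - j)) =O[l] fun x => ‖x‖ ^ (e - j) := by
    refine IsBigO.of_bound C ((hC.filter_mono hl).mono fun x hx => ?_)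
    simpa only [Real.norm_of_nonneg (Real.rpow_nonneg (norm_nonneg x) _)] using hx (x + τ) (by simp)
  refine (((hu j ρs hρs).comp_tendsto hτ).congr_left fun x => ?_).trans hnorm
  exact (Dmulti_comp_add_right ρs u τ x).symm

theorem IsSymbolModConst.Dmulti_taylorRemainder_isBigO [CompleteSpace M] {f : Vec d → M} {m : ℝ}
    (hf : IsSymbolModConst f m) {P : ℕ} (hP : P ≠ 0) (τ : Vec d) (ρs : Fin j → Vec d) :
    Dmulti ρs (taylorRemainder P τ f) =O[cobounded (Vec d)] fun x => ‖x‖ ^ (m - P - j) := by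
  induction j generalizing f m with
  | zero => simpa [Dmulti_zero] using hf.taylorRemainder_isBigO hP τ
  | succ j ih =>
    have hcomm :=
      Dmulti_eventuallyEq_cobounded (hf.taylorRemainder_fwdDiff P τ (ρs 0)) (Fin.tail ρs)
    rw [Dmulti_succ]
    refine hcomm.symm.trans_isBigO
      ((ih (hf.fwdDiff (ρs 0)) (Fin.tail ρs)).congr_right fun x => ?_)
    push_cast
    ring_nf

theorem IsSymbolModConst.taylorRemainder_mem_decayingFunctions [CompleteSpace M]
    {f : Vec d → M} {m : ℝ} (hf : IsSymbolModConst f m) (hl : l ≤ cobounded (Vec d)) {P : ℕ}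
    (hP : P ≠ 0) (τ : Vec d) : taylorRemainder P τ f ∈ decayingFunctions M l R (m - P) :=
  fun _ ρs _ => (hf.Dmulti_taylorRemainder_isBigO hP τ ρs).mono hl

end IteratedDifference

section ContinuumExpansion

open Bornology
open scoped Nat

variable {d N : ℕ}

theorem aContract_tensorPow (i : ℕ) (τ : Vec d) (f : Vec d → ℝ) (x : Vec d) :
    aContract i (tensorPow fun _ => τ) f x = iteratedFDeriv ℝ i f x fun _ => τ := by
  have hτ : τ = ∑ q : Fin d, τ q • (Pi.single q 1 : Vec d) := pi_eq_sum_univ' τ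
  conv_rhs => rw [hτ, ContinuousMultilinearMap.map_sum]
  refine Finset.sum_congr rfl fun js _ => ?_
  rw [ContinuousMultilinearMap.map_smul_univ]
  rfl

/-- The continuum multipole expansion `∑_n ∑_{i < p - 2n} a i n : ∇^i (g n)`, linear in its family
of coefficient tensors `a`. -/
def continuumMultipole (p : ℕ) (g : ℕ → Vec d → Vec N) :
    ((i : ℕ) → ℕ → (Fin i → Fin d) → ℝ) →ₗ[ℝ] Vec d → Vec N where
  toFun a x i0 := ∑ n ∈ Finset.range ((p + 1) / 2), ∑ i ∈ Finset.range (p - 2 * n),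
    aContract i (a i n) (fun y => g n y i0) x
  map_add' a a' := by
    funext x i0
    simp only [aContract, Pi.add_apply, add_mul, Finset.sum_add_distrib]
  map_smul' c a := by
    funext x i0
    simp only [aContract, Pi.smul_apply, smul_eq_mul, mul_assoc, Finset.mul_sum, RingHom.id_apply]

/-- The families of symmetric coefficient tensors. -/
def symmetricTensors (d : ℕ) : Submodule ℝ ((i : ℕ) → ℕ → (Fin i → Fin d) → ℝ) where
  carrier := {a | ∀ i n, SymArr (a i n)}
  zero_mem' _ _ _ _ := rfl
  add_mem' ha ha' i n π js := congr_arg₂ (· + ·) (ha i n π js) (ha' i n π js)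
  smul_mem' c _ ha i n π js := congr_arg (c * ·) (ha i n π js)

/-- The functions that agree with a continuum multipole expansion of order `p` in the kernels `g`,
up to an error decaying `p` orders faster than `|x| ^ m`. -/
def continuumExpandable (l : Filter (Vec d)) (R : Set (Vec d)) (m : ℝ) (p : ℕ)
    (g : ℕ → Vec d → Vec N) : Submodule ℝ (Vec d → Vec N) :=
  (symmetricTensors d).map (continuumMultipole p g) ⊔ decayingFunctions (Vec N) l R (m - p)

/-- The asymptotic expansion `G ~ ∑ n, g n` along `l`, into kernels whose components are symbols of
order `m - 2n` modulo constants. -/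
structure HasKernelExpansion (l : Filter (Vec d)) (R : Set (Vec d)) (m : ℝ) (G : Vec d → Vec N)
    (g : ℕ → Vec d → Vec N) : Prop where
  isSymbol : ∀ n i0, IsSymbolModConst (fun x => g n x i0) (m - 2 * n)
  remainder_mem : ∀ q : ℕ, G - ∑ n ∈ Finset.range (q + 1), g n ∈
    decayingFunctions (Vec N) l R (m - 2 * (q + 1 : ℕ))

/-- The Taylor coefficients `(τ · ∇)^i / i!` of a translation by `τ`, the same for all kernels. -/
def translationTensor (τ : Vec d) (i _n : ℕ) : (Fin i → Fin d) → ℝ :=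
  (i ! : ℝ)⁻¹ • tensorPow fun _ => τ

theorem translationTensor_mem_symmetricTensors (τ : Vec d) :
    translationTensor τ ∈ symmetricTensors d := fun i _ π js =>
  congr_arg ((i ! : ℝ)⁻¹ * ·) (Equiv.prod_comp π fun k => τ (js k))

theorem comp_add_right_eq_continuumMultipole_add (p : ℕ) (g : ℕ → Vec d → Vec N) (τ : Vec d) :
    (fun x => ∑ n ∈ Finset.range ((p + 1) / 2), g n (x + τ)) =
      continuumMultipole p g (translationTensor τ) +
        ∑ n ∈ Finset.range ((p + 1) / 2),
          fun x i0 => taylorRemainder (p - 2 * n) τ (fun y => g n y i0) x := by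
  have hcontract (i n : ℕ) (f : Vec d → ℝ) (x : Vec d) :
      aContract i (translationTensor τ i n) f x =
        (i ! : ℝ)⁻¹ • iteratedFDeriv ℝ i f x fun _ => τ := by
    rw [← aContract_tensorPow]
    simp only [aContract, translationTensor, Pi.smul_apply, smul_eq_mul, mul_assoc, Finset.mul_sum]
  funext x i0
  simp only [continuumMultipole, LinearMap.coe_mk, AddHom.coe_mk, Pi.add_apply, Finset.sum_apply,
    hcontract, taylorRemainder, ← Finset.sum_add_distrib, add_sub_cancel]

/-- As `g n` has order `m - 2n`, expanding it to order `p - 2n ≥ 1` leaves an error of order `m - p`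
for every `n`. -/
theorem HasKernelExpansion.comp_add_right_mem {l : Filter (Vec d)} {R : Set (Vec d)} {m : ℝ}
    {G : Vec d → Vec N} {g : ℕ → Vec d → Vec N} (hG : HasKernelExpansion l R m G g)
    (hl : l ≤ cobounded (Vec d)) {τ : Vec d} (hτ : Tendsto (· + τ) l l) {p : ℕ} (hp : 1 ≤ p) :
    (fun x => G (x + τ)) ∈ continuumExpandable l R m p g := by
  obtain ⟨q, hq⟩ : ∃ q, (p + 1) / 2 = q + 1 := ⟨(p - 1) / 2, by omega⟩
  have hpq : (p : ℝ) ≤ 2 * (q + 1 : ℕ) := mod_cast (by omega : p ≤ 2 * (q + 1))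
  have hremainder := comp_add_right_mem_decayingFunctions hl hτ
    (decayingFunctions_mono hl (sub_le_sub_left hpq m) (hG.remainder_mem q))
  have htaylor : ∑ n ∈ Finset.range ((p + 1) / 2),
      (fun x i0 => taylorRemainder (p - 2 * n) τ (fun y => g n y i0) x) ∈
        decayingFunctions (Vec N) l R (m - p) := by
    refine sum_mem fun n hn => mem_decayingFunctions_pi.mpr fun i0 => ?_
    have hn' : 2 * n < p := by have := Finset.mem_range.mp hn; omega
    have hmem := (hG.isSymbol n i0).taylorRemainder_mem_decayingFunctions (R := R) hl
      (Nat.sub_ne_zero_of_lt hn') τ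
    rwa [Nat.cast_sub hn'.le, Nat.cast_mul, Nat.cast_two, sub_sub_sub_cancel_right] at hmem
  refine Submodule.mem_sup.mpr ⟨_, Submodule.mem_map_of_mem
    (translationTensor_mem_symmetricTensors τ), _, add_mem htaylor hremainder, ?_⟩
  rw [← add_assoc, ← comp_add_right_eq_continuumMultipole_add, hq]
  funext x
  simp

theorem multipole_mem_of_comp_add_right_mem {V : Submodule ℝ (Vec d → Vec N)} {f : Vec d → Vec N}
    {T : AddSubmonoid (Vec d)} (hf : ∀ τ ∈ T, (fun x => f (x + τ)) ∈ V) {s : Fin d → Vec d}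
    (hs : ∀ i, s i ∈ T) (i : ℕ) (b : (Fin i → Fin d) → ℝ) : multipole d N s i b f ∈ V := by
  have hmultipole : multipole d N s i b f = ∑ σ : Fin i → Fin d, b σ • ∑ S : Finset (Fin i),
      (-1 : ℝ) ^ (i - S.card) • fun x => f (x + ∑ k ∈ S, s (σ k)) := by
    funext x
    simp only [multipole, Dmulti, Finset.sum_apply, Pi.smul_apply]
  rw [hmultipole]
  exact sum_mem fun σ _ => V.smul_mem _ <| sum_mem fun S _ => V.smul_mem _ <|
    hf _ (sum_mem fun k _ => hs (σ k))

end ContinuumExpansion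

section Lattice

open Asymptotics Bornology

variable {d N : ℕ}

theorem enorm_eq_norm_toLp (v : Vec d) : enorm v = ‖WithLp.toLp 2 v‖ := by
  simp [EuclideanSpace.norm_eq, enorm]

theorem enorm_smul_of_pos {t : ℝ} (ht : 0 < t) (v : Vec d) : enorm (t • v) = t * enorm v := by
  rw [enorm_eq_norm_toLp, WithLp.toLp_smul, norm_smul, Real.norm_of_nonneg ht.le,
    enorm_eq_norm_toLp]

theorem enorm_ne_zero {v : Vec d} (hv : v ≠ 0) : enorm v ≠ 0 := by
  rwa [enorm_eq_norm_toLp, norm_ne_zero_iff, Ne, WithLp.toLp_eq_zero]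

theorem enorm_isTheta_norm (l : Filter (Vec d)) : (enorm : Vec d → ℝ) =Θ[l] fun v => ‖v‖ := by
  simp only [funext enorm_eq_norm_toLp]
  let toLp : Vec d ≃L[ℝ] EuclideanSpace ℝ (Fin d) := (EuclideanSpace.equiv (Fin d) ℝ).symm
  exact ⟨(toLp.isBigO_comp id l).norm_norm, (toLp.isBigO_comp_rev id l).norm_norm⟩

theorem ang_pos (v : Vec d) : 0 < ang v := add_pos_of_nonneg_of_pos (Real.sqrt_nonneg _) two_pos

theorem ang_rpow_isTheta (e : ℝ) :
    (fun v : Vec d => ang v ^ e) =Θ[cobounded (Vec d)] fun v => ‖v‖ ^ e := by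
  have hang : (ang : Vec d → ℝ) =Θ[cobounded (Vec d)] fun v => ‖v‖ :=
    (enorm_isTheta_norm _).add_isLittleO (isLittleO_const_id_cobounded 2).norm_right
  exact hang.rpow (.of_forall fun v => (ang_pos v).le) (.of_forall norm_nonneg)

theorem abs_apply_le_mnorm (M : Fin N → Fin N → ℝ) (i k : Fin N) : |M i k| ≤ mnorm M := by
  refine Real.abs_le_sqrt ?_
  calc
    M i k ^ 2 ≤ ∑ k, M i k ^ 2 :=
      Finset.single_le_sum (f := fun k => M i k ^ 2) (fun _ _ => sq_nonneg _) (Finset.mem_univ k)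
    _ ≤ ∑ i, ∑ k, M i k ^ 2 :=
      Finset.single_le_sum (f := fun i => ∑ k, M i k ^ 2)
        (fun _ _ => Finset.sum_nonneg fun _ _ => sq_nonneg _) (Finset.mem_univ i)

/-- The parametrisation `z ↦ A z` of the lattice `A ℤ^d` as an additive homomorphism. -/
def latticePtHom (A : Matrix (Fin d) (Fin d) ℝ) : (Fin d → ℤ) →+ Vec d where
  toFun := latticePt d A
  map_zero' := by
    funext i
    simp [latticePt]
  map_add' z z' := by
    funext i
    simp only [latticePt, Pi.add_apply, Int.cast_add, mul_add, Finset.sum_add_distrib]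

/-- The filter of lattice points tending to infinity, in which the asymptotics of lattice functions
are expressed. -/
def latticeInfty (A : Matrix (Fin d) (Fin d) ℝ) : Filter (Vec d) := map (latticePt d A) cofinite

theorem latticeInfty_le_cobounded {A : Matrix (Fin d) (Fin d) ℝ} (hA : IsUnit A.det) :
    latticeInfty A ≤ cobounded (Vec d) := by
  have hcast : Tendsto (fun (z : Fin d → ℤ) j => (z j : ℝ)) cofinite (cobounded (Vec d)) := by
    simpa only [coprodᵢ_cofinite, Metric.cobounded_eq_cocompact, coprodᵢ_cocompact] using
      Tendsto.pi_map_coprodᵢ fun _ : Fin d => Int.tendsto_coe_cofinite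
  have hinj : LinearMap.ker A.mulVecLin = ⊥ :=
    LinearMap.ker_eq_bot.mpr (Matrix.mulVec_injective_of_isUnit ((A.isUnit_iff_isUnit_det).mpr hA))
  have hmulVec := (LinearMap.isClosedEmbedding_of_injective hinj).tendsto_cocompact
  simp only [← Metric.cobounded_eq_cocompact] at hmulVec
  exact hmulVec.comp hcast

theorem tendsto_add_latticeInfty {A : Matrix (Fin d) (Fin d) ℝ} {τ : Vec d}
    (hτ : τ ∈ AddMonoidHom.mrange (latticePtHom A)) :
    Tendsto (· + τ) (latticeInfty A) (latticeInfty A) := by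
  obtain ⟨z, rfl⟩ := hτ
  refine tendsto_map'_iff.mpr ?_
  exact (tendsto_map.comp (add_left_injective z).tendsto_cofinite).congr fun y =>
    map_add (latticePtHom A) y z

theorem DnormJ_isBigO {l : Filter (Vec d)} {R : Finset (Vec d)} {e : ℝ} {w : Vec d → Vec N}
    (hw : w ∈ decayingFunctions (Vec N) l R e) (j : ℕ) :
    DnormJ R j w =O[l] fun x => ‖x‖ ^ (e - j) := by
  have hsq (ρs : Fin j → {x // x ∈ R}) :
      (fun x => enorm (Dmulti (fun i => (ρs i : Vec d)) w x) ^ 2) =O[l]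
        fun x => (‖x‖ ^ (e - j)) ^ 2 := by
    have hD := hw j (fun i => (ρs i : Vec d)) fun i => (ρs i).2
    exact (((enorm_isTheta_norm ⊤).isBigO.comp_tendsto tendsto_top).trans hD.norm_left).pow 2
  refine ((IsBigO.fun_sum fun ρs _ => hsq ρs).sqrt (.of_forall fun x => sq_nonneg _)).congr_right
    fun x => ?_
  exact Real.sqrt_sq (Real.rpow_nonneg (norm_nonneg x) _)

theorem exists_forall_DnormJ_latticePt_le {A : Matrix (Fin d) (Fin d) ℝ} (hA : IsUnit A.det)
    {R : Finset (Vec d)} {e : ℝ} {w : Vec d → Vec N}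
    (hw : w ∈ decayingFunctions (Vec N) (latticeInfty A) R e) (j : ℕ) :
    ∃ C : ℝ, ∀ z : Fin d → ℤ,
      DnormJ R j w (latticePt d A z) ≤ C * ang (latticePt d A z) ^ (e - j) := by
  have hO := (DnormJ_isBigO hw j).trans_isTheta
    ((ang_rpow_isTheta (e - j)).symm.mono (latticeInfty_le_cobounded hA))
  obtain ⟨C, -, hC⟩ := bound_of_isBigO_cofinite (isBigO_map.mp hO)
  refine ⟨C, fun z => ?_⟩
  have hpos : 0 < ang (latticePt d A z) ^ (e - j) := Real.rpow_pos_of_pos (ang_pos _) _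
  simpa only [Function.comp_apply, Real.norm_of_nonneg hpos.le] using
    (Real.le_norm_self _).trans (hC hpos.ne')

theorem isSymbolModConst_col_of_posHomMat {g : Vec d → Fin N → Fin N → ℝ} {m : ℝ}
    (hg : ContDiffOn ℝ (⊤ : ℕ∞) g {x | x ≠ 0}) (hhom : PosHomMat g m) (i k : Fin N) :
    IsSymbolModConst (fun x => col g k x i) m :=
  isSymbolModConst_of_map_smul (c := 0) (contDiffOn_pi.mp (contDiffOn_pi.mp hg i) k)
    fun t ht x hx => by simpa [col] using hhom t ht x hx i k

theorem isSymbolModConst_col_of_eq_log_add {g φ : Vec d → Fin N → Fin N → ℝ}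
    {M : Fin N → Fin N → ℝ} (hg : ContDiffOn ℝ (⊤ : ℕ∞) g {x | x ≠ 0}) (hφ : PosHomMat φ 0)
    (hgφ : ∀ x ≠ 0, ∀ i k, g x i k = M i k * Real.log (enorm x) + φ x i k) (i k : Fin N) :
    IsSymbolModConst (fun x => col g k x i) 0 :=
  isSymbolModConst_of_map_smul (c := fun t => M i k * Real.log t)
    (contDiffOn_pi.mp (contDiffOn_pi.mp hg i) k) fun t ht x hx => by
      simp only [col, hgφ x hx, hgφ _ (smul_ne_zero ht.ne' hx), hφ t ht x hx, Real.rpow_zero,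
        one_smul, one_mul, enorm_smul_of_pos ht, Real.log_mul ht.ne' (enorm_ne_zero hx)]
      ring

theorem KernelFamily.isSymbolModConst {A : Matrix (Fin d) (Fin d) ℝ} {R : Finset (Vec d)}
    {G : Vec d → Fin N → Fin N → ℝ} {Gn : ℕ → Vec d → Fin N → Fin N → ℝ}
    (hGn : KernelFamily d N A R G Gn) (hd : 2 ≤ d) (n : ℕ) (i k : Fin N) :
    IsSymbolModConst (fun x => col (Gn n) k x i) (2 - d - 2 * n) := by
  obtain ⟨hsmooth, hhom, hlog, -⟩ := hGn
  by_cases hnd : 1 ≤ n ∨ 3 ≤ d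
  · rw [sub_right_comm]
    exact isSymbolModConst_col_of_posHomMat (hsmooth n) (hhom n hnd) i k
  · obtain ⟨rfl, rfl⟩ : n = 0 ∧ d = 2 := by omega
    obtain ⟨M, φ, -, hφ, hG0⟩ := hlog rfl
    simpa using isSymbolModConst_col_of_eq_log_add (hsmooth 0) hφ hG0 i k

theorem KernelFamily.remainder_mem {A : Matrix (Fin d) (Fin d) ℝ} {R : Finset (Vec d)}
    {G : Vec d → Fin N → Fin N → ℝ} {Gn : ℕ → Vec d → Fin N → Fin N → ℝ}
    (hGn : KernelFamily d N A R G Gn) (hA : IsUnit A.det) (k : Fin N) (q : ℕ) :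
    col G k - ∑ n ∈ Finset.range (q + 1), col (Gn n) k ∈
      decayingFunctions (Vec N) (latticeInfty A) R (2 - d - 2 * (q + 1 : ℕ)) := by
  refine mem_decayingFunctions_pi.mpr fun i j ρs hρs => ?_
  obtain ⟨C, hC⟩ := hGn.2.2.2 j q
  have hstencil : ∀ᶠ x in latticeInfty A, ∀ S : Finset (Fin j), x + ∑ i ∈ S, ρs i ≠ 0 :=
    latticeInfty_le_cobounded hA <| eventually_all.mpr fun S =>
      (tendsto_add_const_cobounded _).eventually (eventually_ne_cobounded 0)
  have hlattice : Set.range (latticePt d A) ∈ latticeInfty A := range_mem_map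
  refine IsBigO.trans (IsBigO.of_bound C ?_)
    ((ang_rpow_isTheta _).isBigO.mono (latticeInfty_le_cobounded hA))
  filter_upwards [hstencil, hlattice]
  rintro _ hz ⟨z, rfl⟩
  rw [Real.norm_of_nonneg (Real.rpow_nonneg (ang_pos _).le _)]
  have hexponent : (2 - d - 2 * (q + 1 : ℕ) - j : ℝ) = -(2 : ℝ) * q - d - j := by
    push_cast
    ring
  rw [hexponent]
  refine le_of_eq_of_le ?_ ((abs_apply_le_mnorm _ i k).trans (hC (fun m => ⟨ρs m, hρs m⟩) z hz))
  simp only [Real.norm_eq_abs, Dmulti_apply, col, Pi.sub_apply, Finset.sum_apply]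

theorem KernelFamily.hasKernelExpansion {A : Matrix (Fin d) (Fin d) ℝ} {R : Finset (Vec d)}
    {G : Vec d → Fin N → Fin N → ℝ} {Gn : ℕ → Vec d → Fin N → Fin N → ℝ}
    (hGn : KernelFamily d N A R G Gn) (hd : 2 ≤ d) (hA : IsUnit A.det) (k : Fin N) :
    HasKernelExpansion (latticeInfty A) R (2 - d) (col G k) fun n => col (Gn n) k where
  isSymbol n i := hGn.isSymbolModConst hd n i k
  remainder_mem q := hGn.remainder_mem hA k q

theorem KernelFamily.sum_multipole_mem_continuumExpandable {A : Matrix (Fin d) (Fin d) ℝ}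
    {R : Finset (Vec d)} {G : Vec d → Fin N → Fin N → ℝ} {Gn : ℕ → Vec d → Fin N → Fin N → ℝ}
    (hGn : KernelFamily d N A R G Gn) (hd : 2 ≤ d) (hA : IsUnit A.det) {s : Fin d → Vec d}
    (hs : ∀ i, s i ∈ Lattice d A) {p : ℕ} (hp : 1 ≤ p) (I : Finset ℕ)
    (b : (i : ℕ) → (Fin i → Fin d) → ℝ) (k : Fin N) :
    ∑ i ∈ I, multipole d N s i (b i) (col G k) ∈
      continuumExpandable (latticeInfty A) R (2 - d) p fun n => col (Gn n) k :=
  sum_mem fun i _ => multipole_mem_of_comp_add_right_mem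
    (fun _ hτ => (hGn.hasKernelExpansion hd hA k).comp_add_right_mem
      (latticeInfty_le_cobounded hA) (tendsto_add_latticeInfty hτ) hp) hs i (b i)

end Lattice

theorem multipole_continuum_rewriting_general
    (d N : ℕ) (hd : 2 ≤ d)
    (A : Matrix (Fin d) (Fin d) ℝ) (hA : IsUnit A.det) (R : Finset (Vec d))
    (G : Vec d → Fin N → Fin N → ℝ)
    (Gn : ℕ → Vec d → Fin N → Fin N → ℝ) (hGn : KernelFamily d N A R G Gn)
    (s : Fin d → Vec d) (hslat : ∀ i, s i ∈ Lattice d A) (p : ℕ) (hp : 1 ≤ p)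
    (b : (i : ℕ) → Fin N → (Fin i → Fin d) → ℝ) :
    ∃ a : (i : ℕ) → ℕ → Fin N → (Fin i → Fin d) → ℝ,
      (∀ (i n : ℕ) (k : Fin N), SymArr (a i n k)) ∧
      (∀ j : ℕ, ∃ Cj : ℝ, ∀ z : Fin d → ℤ,
        DnormJ R j
          (fun ℓ i0 =>
            (∑ i ∈ Finset.range p, ∑ k : Fin N,
              multipole d N s i (b i k) (col G k) ℓ i0) -
            (if ℓ = 0 then 0 else
              ∑ k : Fin N, ∑ n ∈ Finset.range ((p + 1) / 2),
                ∑ i ∈ Finset.range (p - 2 * n),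
                  aContract i (a i n k) (fun x => Gn n x i0 k) ℓ))
          (latticePt d A z) ≤
          Cj * ang (latticePt d A z) ^ ((2 : ℝ) - d - j - p)) := by
  have hexpand (k : Fin N) : ∃ a ∈ symmetricTensors d, ∃ w ∈ decayingFunctions (Vec N)
      (latticeInfty A) R (2 - d - p), continuumMultipole p (fun n => col (Gn n) k) a + w =
        ∑ i ∈ Finset.range p, multipole d N s i (b i k) (col G k) := by
    simpa only [continuumExpandable, Submodule.mem_sup, Submodule.mem_map, exists_exists_and_eq_and]
      using hGn.sum_multipole_mem_continuumExpandable hd hA hslat hp (Finset.range p)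
        (fun i => b i k) k
  choose a ha w hw haw using hexpand
  have hwsum : ∑ k, w k ∈ decayingFunctions (Vec N) (latticeInfty A) R (2 - d - p) :=
    sum_mem fun k _ => hw k
  refine ⟨fun i n k => a k i n, fun i n k => ha k i n, fun j => ?_⟩
  rw [sub_right_comm]
  refine exists_forall_DnormJ_latticePt_le hA (mem_decayingFunctions_of_eventuallyEq
    (latticeInfty_le_cobounded hA) hwsum ?_) j
  filter_upwards [Bornology.eventually_ne_cobounded 0] with x hx
  funext i0
  have hwk (k : Fin N) := congr_fun (congr_fun (eq_sub_of_add_eq' (haw k)) x) i0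
  simp only [if_neg hx, Finset.sum_apply, hwk, Pi.sub_apply, Finset.sum_sub_distrib]
  rw [Finset.sum_comm]
  rfl

/-- Lemma: continuum rewriting of the discrete multipole
expansion. -/
theorem multipole_continuum_rewriting
    (d N : ℕ) (hd : 2 ≤ d)
    (A : Matrix (Fin d) (Fin d) ℝ) (hA : IsUnit A.det)
    (R : Finset (Vec d)) (hR0 : (0 : Vec d) ∉ R)
    (hRlat : ∀ ρ ∈ R, ρ ∈ Lattice d A)
    (hRsym : ∀ ρ ∈ R, -ρ ∈ R)
    (hRspan : ∀ x ∈ Lattice d A, ∃ c : Vec d → ℤ, x = ∑ ρ ∈ R, (c ρ : ℝ) • ρ)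
    (C : Vec d → Vec d → Fin N → Fin N → ℝ)
    (hCsym : ∀ σ ρ i j, C σ ρ i j = C ρ σ j i)
    (hCpt : ∀ σ ρ, C σ ρ = C (-σ) (-ρ))
    (hstab : IsStable d N A R C)
    (G : Vec d → Fin N → Fin N → ℝ) (hG : IsLatticeGreen d N A R C G)
    (Gn : ℕ → Vec d → Fin N → Fin N → ℝ) (hGn : KernelFamily d N A R G Gn)
    (s : Fin d → Vec d) (hslat : ∀ i, s i ∈ Lattice d A)
    (hsind : LinearIndependent ℝ s)
    (hsspan : ∀ x ∈ Lattice d A, ∃ z : Fin d → ℤ, x = ∑ i, (z i : ℝ) • s i)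
    (p : ℕ) (hp : 1 ≤ p)
    (b : (i : ℕ) → Fin N → (Fin i → Fin d) → ℝ)
    (hb : ∀ (i : ℕ) (k : Fin N), SymArr (b i k)) :
    ∃ a : (i : ℕ) → ℕ → Fin N → (Fin i → Fin d) → ℝ,
      (∀ (i n : ℕ) (k : Fin N), SymArr (a i n k)) ∧
      (∀ j : ℕ, ∃ Cj : ℝ, ∀ z : Fin d → ℤ,
        DnormJ R j
          (fun ℓ i0 =>
            (∑ i ∈ Finset.range p, ∑ k : Fin N,
              multipole d N s i (b i k) (col G k) ℓ i0) -
            (if ℓ = 0 then 0 else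
              ∑ k : Fin N, ∑ n ∈ Finset.range ((p + 1) / 2),
                ∑ i ∈ Finset.range (p - 2 * n),
                  aContract i (a i n k) (fun x => Gn n x i0 k) ℓ))
          (latticePt d A z) ≤
          Cj * ang (latticePt d A z) ^ ((2 : ℝ) - d - j - p)) :=
  multipole_continuum_rewriting_general d N hd A hA R G Gn hGn s hslat p hp b

end Defect
end
end

section
/- (Series inversion of the lattice Fourier multiplier.) Let ℛ' ⊂ ℝ^d∖{0} be a finite symmetric set (ℛ' = −ℛ') spanning ℝ^d, and for each ρ ∈ ℛ' let A_ρ ∈ ℝ^{N×N} be symmetric with A_ρ = A_{−ρ}. Define Ĥ(k) := ∑_{ρ∈ℛ'} 4 A_ρ sin²(k·ρ/2) and, for n ≥ 1, Ĥ_{2n}(k) := ∑_{ρ∈ℛ'} (−1)^{n+1}(2/(2n)!)(k·ρ)^{2n} A_ρ. Assume stability: Ĥ(k) ⪰ c₀ (∑_{ρ∈ℛ'} 4 sin²(k·ρ/2)) Id in the sense of symmetric matrices, for all k ∈ ℝ^d and some c₀ > 0. Define 𝒜_{−2}(k) := Ĥ₂(k)^{−1} and, for n ≥ 0, 𝒜_{2n}(k)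 := ∑_{j=1}^{n+1} (−1)^j ∑_{α∈𝐀_{j,2n}} Ĥ₂(k)^{−1}Ĥ_{α₁}(k)Ĥ₂(k)^{−1}⋯Ĥ₂(k)^{−1}Ĥ_{α_j}(k)Ĥ₂(k)^{−1}, where 𝐀_{j,2n} := {α ∈ (2ℕ)^j : α_i ≥ 4 for all i and α₁+⋯+α_j = 2n+2j+2}. Then: (i) for every k ∈ ℝ^d, ∑_{n≥1} Ĥ_{2n}(k) converges absolutely to Ĥ(k); (ii) Ĥ₂(k) is invertible for every k ≠ 0, and each 𝒜_{2n} is smooth on ℝ^d∖{0} and positively homogeneous of degree 2n; (iii) there exists ε > 0 such that for every k with 0 < |k| < ε, Ĥ(k) is invertible and the series ∑_{n=−1}^{∞} 𝒜_{2n}(k) converges absolutely in matrix norm with sum Ĥ(k)^{−1}. -/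
noncomputable section

open scoped BigOperators
open MeasureTheory Filter Topology

namespace Defect

/-- The lattice Fourier multiplier `Ĥ(k) = ∑_ρ 4 A_ρ sin²(k·ρ/2)`. -/
def Hhat (d N : ℕ) (R' : Finset (Vec d)) (Am : Vec d → Matrix (Fin N) (Fin N) ℝ)
    (k : Vec d) : Matrix (Fin N) (Fin N) ℝ :=
  ∑ ρ ∈ R', (4 * Real.sin (dotV k ρ / 2) ^ 2) • Am ρ

/-- The homogeneous expansion terms `Ĥ_{2n}(k)`. -/
def H2n (d N : ℕ) (R' : Finset (Vec d)) (Am : Vec d → Matrix (Fin N) (Fin N) ℝ)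
    (n : ℕ) (k : Vec d) : Matrix (Fin N) (Fin N) ℝ :=
  ∑ ρ ∈ R', ((-1 : ℝ) ^ (n + 1) * 2 / ((2 * n).factorial : ℝ) * (dotV k ρ) ^ (2 * n)) • Am ρ

/-- Frobenius norm of a matrix. -/
def mnormM {N : ℕ} (M : Matrix (Fin N) (Fin N) ℝ) : ℝ :=
  Real.sqrt (∑ i, ∑ j, (M i j) ^ 2)

/-- The `2n`-homogeneous term `𝒜_{2n}` of the inverse multiplier series. -/
def calA (d N : ℕ) (R' : Finset (Vec d)) (Am : Vec d → Matrix (Fin N) (Fin N) ℝ)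
    (n : ℕ) (k : Vec d) : Matrix (Fin N) (Fin N) ℝ :=
  ∑ j ∈ Finset.Icc 1 (n + 1), ((-1 : ℝ) ^ j) •
    ∑ fα : Fin j → Fin (2 * n + 2 * j + 3),
      if (∀ i, 4 ≤ (fα i : ℕ) ∧ (fα i : ℕ) % 2 = 0) ∧
          (∑ i, (fα i : ℕ)) = 2 * n + 2 * j + 2 then
        (H2n d N R' Am 1 k)⁻¹ *
          (List.ofFn (fun i : Fin j =>
            H2n d N R' Am ((fα i : ℕ) / 2) k * (H2n d N R' Am 1 k)⁻¹)).prod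
      else 0

/-!
Along the ray through `k ≠ 0`, the expansion `∑ₙ Ĥ₂ₙ` is a power series in the square of the radius
whose leading term `Ĥ₂(k)` is invertible: dividing the stability inequality at `t k` by `t²` and
letting `t → 0` gives `Ĥ₂(k) ⪰ c₀ ∑_ρ (k·ρ)² Id`, which is positive definite because `ℛ'` spans.
Hence `(∑ₙ Ĥ₂ₙ) Ĥ₂⁻¹ = 1 + E` with `E` a power series without constant term, and the inverse is
`Ĥ₂⁻¹ ∑ⱼ (-E)ʲ`. Expanding the powers of `E` over compositions shows that its coefficients are the
`𝒜₂ₙ`, so smoothness and homogeneity pass from the coefficients of `E` to them.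

For convergence, compactness of the unit sphere and homogeneity bound the degree-`2a` coefficient of
`E` by `K |k| ^ (2a)`, so the norms of the coefficients of `E` sum to less than `1` for small `k`.
From `G = 1 - E G` and submultiplicativity of the Cauchy product, the coefficients of the inverse
`G` of `1 + E` are then absolutely summable, and the formal inverse is an actual one.
-/

section FormalSeries

open PowerSeries Finset

variable {R : Type*} [Semiring R]

/-- The geometric series `∑ⱼ F ^ j` of a power series `F` with zero constant coefficient. Only the
terms `j ≤ m` reach degree `m`, so the coefficients are finite sums. -/
def geomSeries (F : R⟦X⟧) : R⟦X⟧ :=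
  PowerSeries.mk fun m => coeff m (∑ j ∈ range (m + 1), F ^ j)

lemma coeff_pow_eq_zero_of_lt {F : R⟦X⟧} (hF : coeff 0 F = 0) {j m : ℕ} (hmj : m < j) :
    coeff m (F ^ j) = 0 :=
  coeff_of_lt_order m <| (Nat.cast_lt.mpr hmj).trans_le <|
    le_order_pow_of_constantCoeff_eq_zero j (by rwa [← coeff_zero_eq_constantCoeff_apply])

lemma coeff_geomSeries {F : R⟦X⟧} (hF : coeff 0 F = 0) {m M : ℕ} (hmM : m ≤ M) :
    coeff m (geomSeries F) = coeff m (∑ j ∈ range (M + 1), F ^ j) := by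
  rw [geomSeries, coeff_mk, map_sum, map_sum]
  refine sum_subset (range_mono (by lia)) fun j _ hj => coeff_pow_eq_zero_of_lt hF ?_
  simpa using hj

lemma one_sub_mul_geomSeries {R : Type*} [Ring R] {F : R⟦X⟧} (hF : coeff 0 F = 0) :
    (1 - F) * geomSeries F = 1 := by
  ext m
  calc coeff m ((1 - F) * geomSeries F)
      = coeff m ((1 - F) * ∑ j ∈ range (m + 1), F ^ j) := by
        rw [coeff_mul, coeff_mul]
        exact sum_congr rfl fun x hx => by
          rw [coeff_geomSeries hF (HasAntidiagonal.antidiagonal.snd_le hx)]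
    _ = coeff m 1 := by
        rw [mul_neg_geom_sum, map_sub, coeff_pow_eq_zero_of_lt hF m.lt_succ_self, sub_zero]

lemma coeff_pow_eq_sum_antidiagonalTuple (F : R⟦X⟧) (j m : ℕ) :
    coeff m (F ^ j) =
      ∑ g ∈ Nat.antidiagonalTuple j m, (List.ofFn fun i => coeff (g i) F).prod := by
  induction j generalizing m with
  | zero => cases m <;> simp [coeff_one]
  | succ j ih =>
    simp_rw [pow_succ', coeff_mul, ih, mul_sum]
    rw [sum_sigma']
    refine sum_bij' (fun x _ => Fin.cons x.1.1 x.2)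
      (fun g _ => ⟨(g 0, ∑ i, Fin.tail g i), Fin.tail g⟩) ?_ ?_ ?_ ?_ ?_
    · rintro ⟨⟨a, b⟩, f⟩ h
      simp_all [Nat.mem_antidiagonalTuple, Fin.sum_univ_succ]
    · intro g h
      simpa [Nat.mem_antidiagonalTuple, Fin.sum_univ_succ, Fin.tail] using h
    · rintro ⟨⟨a, b⟩, f⟩ h
      simp_all [Nat.mem_antidiagonalTuple]
    · simp
    · simp [List.ofFn_succ]

lemma coeff_pow_eq_sum_ne_zero {F : R⟦X⟧} (hF : coeff 0 F = 0) (j m : ℕ) :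
    coeff m (F ^ j) = ∑ g ∈ Nat.antidiagonalTuple j m with ∀ i, g i ≠ 0,
      (List.ofFn fun i => coeff (g i) F).prod := by
  rw [coeff_pow_eq_sum_antidiagonalTuple]
  refine (sum_filter_of_ne fun g _ hg i hi => hg ?_).symm
  exact List.prod_eq_zero (List.mem_ofFn.mpr ⟨i, by rw [hi, hF]⟩)

lemma coeff_pow_of_coeff_eq_smul {S : Type*} [CommSemiring S] [Algebra S R] {F G : R⟦X⟧} {c : S}
    (h : ∀ a, coeff a G = c ^ a • coeff a F) (j m : ℕ) :
    coeff m (G ^ j) = c ^ m • coeff m (F ^ j) := by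
  induction j generalizing m with
  | zero => cases m <;> simp [coeff_one]
  | succ j ih =>
    rw [pow_succ, pow_succ, coeff_mul, coeff_mul, smul_sum]
    refine sum_congr rfl fun x hx => ?_
    rw [ih, h, smul_mul_smul_comm, ← pow_add, mem_antidiagonal.mp hx]

lemma coeff_geomSeries_of_coeff_eq_smul {S : Type*} [CommSemiring S] [Algebra S R] {F G : R⟦X⟧}
    {c : S} (h : ∀ a, coeff a G = c ^ a • coeff a F) (m : ℕ) :
    coeff m (geomSeries G) = c ^ m • coeff m (geomSeries F) := by
  simp only [geomSeries, coeff_mk, map_sum, smul_sum, coeff_pow_of_coeff_eq_smul h]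

end FormalSeries

section ConvergentSeries

open PowerSeries Finset

variable {𝔸 : Type*} [NormedRing 𝔸]

lemma sum_range_sum_antidiagonal_mul_le {f g : ℕ → ℝ} (hf : Summable f) (hf0 : ∀ a, 0 ≤ f a)
    (hg0 : ∀ b, 0 ≤ g b) (M : ℕ) :
    ∑ m ∈ range M, ∑ x ∈ antidiagonal m, f x.1 * g x.2 ≤ (∑' a, f a) * ∑ b ∈ range M, g b := by
  calc ∑ m ∈ range M, ∑ x ∈ antidiagonal m, f x.1 * g x.2
      = ∑ x ∈ range M ×ˢ range M with x.1 + x.2 < M, f x.1 * g x.2 := by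
        rw [sum_sigma']
        refine sum_bij' (fun x _ => x.2) (fun x _ => ⟨x.1 + x.2, x⟩) ?_ ?_ ?_ ?_ ?_ <;>
          grind [HasAntidiagonal.mem_antidiagonal]
    _ ≤ ∑ x ∈ range M ×ˢ range M, f x.1 * g x.2 :=
        sum_le_sum_of_subset_of_nonneg (filter_subset _ _)
          fun x _ _ => mul_nonneg (hf0 x.1) (hg0 x.2)
    _ = (∑ a ∈ range M, f a) * ∑ b ∈ range M, g b := by rw [sum_mul_sum, sum_product]
    _ ≤ (∑' a, f a) * ∑ b ∈ range M, g b :=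
        mul_le_mul_of_nonneg_right (hf.sum_le_tsum _ fun a _ => hf0 a)
          (sum_nonneg fun b _ => hg0 b)

lemma summable_norm_coeff_of_one_sub_mul_eq_one {F G : 𝔸⟦X⟧} (hFG : (1 - F) * G = 1)
    (hF : Summable fun a => ‖coeff a F‖) (hF1 : ∑' a, ‖coeff a F‖ < 1) :
    Summable fun m => ‖coeff m G‖ := by
  set q : ℝ := ∑' a, ‖coeff a F‖
  have hG : G = 1 + F * G := by rw [← hFG, sub_mul, one_mul, sub_add_cancel]
  have norm_coeff_le (m : ℕ) : ‖coeff m G‖ ≤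
      ‖coeff m (1 : 𝔸⟦X⟧)‖ + ∑ x ∈ antidiagonal m, ‖coeff x.1 F‖ * ‖coeff x.2 G‖ := by
    conv_lhs => rw [hG, map_add, coeff_mul]
    grw [norm_add_le, norm_sum_le]
    gcongr
    exact norm_mul_le _ _
  refine summable_of_sum_range_le (c := ‖(1 : 𝔸)‖ / (1 - q)) (fun _ => norm_nonneg _) fun M => ?_
  rw [le_div_iff₀ (sub_pos.mpr hF1)]
  have sum_norm_one : ∑ m ∈ range M, ‖coeff m (1 : 𝔸⟦X⟧)‖ ≤ ‖(1 : 𝔸)‖ := by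
    simp only [coeff_one, apply_ite norm, norm_zero, sum_ite_eq']
    split_ifs <;> simp
  have sum_norm_le : ∑ m ∈ range M, ‖coeff m G‖ ≤ ‖(1 : 𝔸)‖ + q * ∑ m ∈ range M, ‖coeff m G‖ := by
    grw [← sum_norm_one, ← sum_range_sum_antidiagonal_mul_le hF (fun _ => norm_nonneg _)
      (fun _ => norm_nonneg _), ← sum_add_distrib]
    exact sum_le_sum fun m _ => norm_coeff_le m
  linarith

lemma hasSum_coeff_mul [CompleteSpace 𝔸] {F G : 𝔸⟦X⟧} {a b : 𝔸}
    (hF : Summable fun m => ‖coeff m F‖) (hG : Summable fun m => ‖coeff m G‖)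
    (ha : HasSum (fun m => coeff m F) a) (hb : HasSum (fun m => coeff m G) b) :
    HasSum (fun m => coeff m (F * G)) (a * b) := by
  simp only [coeff_mul]
  rw [← ha.tsum_eq, ← hb.tsum_eq, tsum_mul_tsum_eq_tsum_sum_antidiagonal_of_summable_norm hF hG]
  exact (summable_norm_sum_mul_antidiagonal_of_summable_norm hF hG).of_norm.hasSum

lemma mul_eq_one_of_hasSum_coeff [CompleteSpace 𝔸] {F G : 𝔸⟦X⟧} {a b : 𝔸} (hFG : F * G = 1)
    (hF : Summable fun m => ‖coeff m F‖) (hG : Summable fun m => ‖coeff m G‖)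
    (ha : HasSum (fun m => coeff m F) a) (hb : HasSum (fun m => coeff m G) b) : a * b = 1 := by
  have h_one : HasSum (fun m => coeff m (1 : 𝔸⟦X⟧)) 1 := by
    simpa only [coeff_one] using hasSum_ite_eq 0 (1 : 𝔸)
  exact (hFG ▸ hasSum_coeff_mul hF hG ha hb).unique h_one

variable {𝕜 : Type*} [NontriviallyNormedField 𝕜] [NormedAlgebra 𝕜 𝔸] {E : Type*}
  [NormedAddCommGroup E] [NormedSpace 𝕜 E] {n : WithTop ℕ∞} {s : Set E} {F : E → 𝔸⟦X⟧}

lemma contDiffOn_coeff_pow (hF : ∀ a, ContDiffOn 𝕜 n (fun x => coeff a (F x)) s) (j m : ℕ) :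
    ContDiffOn 𝕜 n (fun x => coeff m (F x ^ j)) s := by
  induction j generalizing m with
  | zero => simpa only [pow_zero] using contDiffOn_const
  | succ j ih =>
    simp only [pow_succ, coeff_mul]
    exact ContDiffOn.sum fun x _ => (ih x.1).mul (hF x.2)

lemma contDiffOn_coeff_geomSeries (hF : ∀ a, ContDiffOn 𝕜 n (fun x => coeff a (F x)) s) (m : ℕ) :
    ContDiffOn 𝕜 n (fun x => coeff m (geomSeries (F x))) s := by
  simp only [geomSeries, coeff_mk, map_sum]
  exact ContDiffOn.sum fun j _ => contDiffOn_coeff_pow hF j m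

end ConvergentSeries

lemma summable_and_tsum_lt_one_of_le_geometric {f : ℕ → ℝ} {K r : ℝ} (hf : ∀ a, 0 ≤ f a)
    (hf0 : f 0 = 0) (hfle : ∀ a, f a ≤ K * r ^ a) (hK : 0 ≤ K) (hr : 0 ≤ r)
    (hKr : (K + 1) * r < 1) : Summable f ∧ ∑' a, f a < 1 := by
  have hr1 : r < 1 := by nlinarith
  have hgeom : HasSum (fun a => K * r * r ^ a) (K * r * (1 - r)⁻¹) :=
    (hasSum_geometric_of_lt_one hr hr1).mul_left _
  have hf_succ_le (a : ℕ) : f (a + 1) ≤ K * r * r ^ a := (hfle _).trans_eq (by ring)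
  have hf_succ : Summable fun a => f (a + 1) :=
    .of_nonneg_of_le (fun a => hf _) hf_succ_le hgeom.summable
  have hsum : Summable f := (summable_nat_add_iff 1).mp hf_succ
  refine ⟨hsum, ?_⟩
  calc ∑' a, f a = ∑' a, f (a + 1) := by rw [hsum.tsum_eq_zero_add, hf0, zero_add]
    _ ≤ K * r * (1 - r)⁻¹ := hasSum_le hf_succ_le hf_succ.hasSum hgeom
    _ < 1 := by rw [← div_eq_mul_inv, div_lt_one (sub_pos.mpr hr1)]; linarith

section EvenCompositions

open Finset

/-- The index set `𝐀_{j,2n}` of tuples of even numbers `αᵢ ≥ 4` with `∑ᵢ αᵢ = 2n + 2j + 2`. The sum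
bounds each `αᵢ`, so nothing is lost by letting `α` range over a finite type. -/
def evenCompositions (j n : ℕ) : Finset (Fin j → Fin (2 * n + 2 * j + 3)) :=
  {α | (∀ i, 4 ≤ (α i : ℕ) ∧ (α i : ℕ) % 2 = 0) ∧ ∑ i, (α i : ℕ) = 2 * n + 2 * j + 2}

lemma mem_evenCompositions {j n : ℕ} {α : Fin j → Fin (2 * n + 2 * j + 3)} :
    α ∈ evenCompositions j n ↔
      (∀ i, 4 ≤ (α i : ℕ) ∧ (α i : ℕ) % 2 = 0) ∧ ∑ i, (α i : ℕ) = 2 * n + 2 * j + 2 := by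
  simp [evenCompositions]

lemma sum_evenCompositions {M : Type*} [AddCommMonoid M] (j n : ℕ) (f : (Fin j → ℕ) → M) :
    ∑ α ∈ evenCompositions j n, f (fun i => (α i : ℕ) / 2) =
      ∑ g ∈ Nat.antidiagonalTuple j (n + 1) with ∀ i, g i ≠ 0, f (fun i => g i + 1) := by
  have sum_two_mul_succ (g : Fin j → ℕ) : ∑ i, 2 * (g i + 1) = 2 * ∑ i, g i + 2 * j := by
    simp [← mul_sum, sum_add_distrib, mul_add, mul_comm j]
  have eq_two_mul_succ {α : Fin j → Fin (2 * n + 2 * j + 3)} (hα : α ∈ evenCompositions j n)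
      (i : Fin j) : (α i : ℕ) = 2 * ((α i : ℕ) / 2 - 1 + 1) := by
    have := (mem_evenCompositions.mp hα).1 i
    lia
  refine sum_nbij (fun α i => (α i : ℕ) / 2 - 1) (fun α hα => ?_) (fun α hα β hβ hαβ => ?_)
    (fun g hg => ?_) fun α hα => ?_
  · obtain ⟨hα_even, hα_sum⟩ := mem_evenCompositions.mp hα
    rw [sum_congr rfl fun i _ => eq_two_mul_succ hα i, sum_two_mul_succ] at hα_sum
    rw [mem_filter, Nat.mem_antidiagonalTuple]
    exact ⟨by lia, fun i => by have := hα_even i; lia⟩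
  · ext i
    have h_half : (α i : ℕ) / 2 - 1 = (β i : ℕ) / 2 - 1 := congrFun hαβ i
    rw [eq_two_mul_succ hα, eq_two_mul_succ hβ, h_half]
  · obtain ⟨hg_sum, hg_ne⟩ := mem_filter.mp hg
    have h_sum : ∑ i, 2 * (g i + 1) = 2 * n + 2 * j + 2 := by
      rw [sum_two_mul_succ, Nat.mem_antidiagonalTuple.mp hg_sum]
      ring
    have h_lt (i : Fin j) : 2 * (g i + 1) < 2 * n + 2 * j + 3 := Nat.lt_succ_of_le <|
      h_sum ▸ single_le_sum (f := fun i => 2 * (g i + 1)) (fun i _ => Nat.zero_le _) (mem_univ i)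
    refine ⟨fun i => ⟨2 * (g i + 1), h_lt i⟩, mem_evenCompositions.mpr ⟨fun i => ?_, h_sum⟩, ?_⟩
    · have := hg_ne i
      simp only
      lia
    · simp
  · exact congrArg f (funext fun i => by have := eq_two_mul_succ hα i; lia)

end EvenCompositions

section LatticeSymbol

open scoped Matrix.Norms.Frobenius

variable {d N : ℕ} {R' : Finset (Vec d)} {Am : Vec d → Matrix (Fin N) (Fin N) ℝ}

lemma mnormM_eq_norm (M : Matrix (Fin N) (Fin N) ℝ) : mnormM M = ‖M‖ := by
  simp [mnormM, Matrix.frobenius_norm_def, Real.sqrt_eq_rpow]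

lemma norm_le_enorm (k : Vec d) : ‖k‖ ≤ enorm k :=
  (pi_norm_le_iff_of_nonneg (Real.sqrt_nonneg _)).mpr fun i => Real.abs_le_sqrt <|
    Finset.single_le_sum (f := fun i => k i ^ 2) (fun i _ => sq_nonneg (k i)) (Finset.mem_univ i)

lemma dotV_smul (t : ℝ) (k ρ : Vec d) : dotV (t • k) ρ = t * dotV k ρ :=
  smul_dotProduct t k ρ

lemma contDiff_dotV (ρ : Vec d) {n : WithTop ℕ∞} : ContDiff ℝ n fun k => dotV k ρ := by
  unfold dotV
  fun_prop

lemma hasSum_entry {ι m n α : Type*} [AddCommMonoid α] [TopologicalSpace α]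
    {f : ι → Matrix m n α} {M : Matrix m n α} (h : HasSum f M) (i : m) (j : n) :
    HasSum (fun a => f a i j) (M i j) :=
  Pi.hasSum.mp (Pi.hasSum.mp h i) j

lemma contDiffOn_entry {𝕜 E m n : Type*} [NontriviallyNormedField 𝕜] [CompleteSpace 𝕜]
    [NormedAddCommGroup E] [NormedSpace 𝕜 E] [Fintype m] [Fintype n] {r : WithTop ℕ∞} {s : Set E}
    {f : E → Matrix m n 𝕜} (h : ContDiffOn 𝕜 r f s) (i : m) (j : n) :
    ContDiffOn 𝕜 r (fun x => f x i j) s :=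
  (Matrix.entryLinearMap 𝕜 𝕜 i j).toContinuousLinearMap.contDiff.comp_contDiffOn h

lemma hasSum_four_mul_sin_half_sq (x : ℝ) :
    HasSum (fun n : ℕ => (-1 : ℝ) ^ (n + 1 + 1) * 2 / ((2 * (n + 1)).factorial : ℝ) *
      x ^ (2 * (n + 1))) (4 * Real.sin (x / 2) ^ 2) := by
  have h_cos := ((hasSum_nat_add_iff' 1).mpr (Real.hasSum_cos x)).mul_left (-2)
  have h_sin : 4 * Real.sin (x / 2) ^ 2 = -2 * (Real.cos x - 1) := by
    rw [Real.sin_sq_eq_half_sub, mul_div_cancel₀ x two_ne_zero]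
    ring
  simp only [Finset.sum_range_one, mul_zero, pow_zero, Nat.factorial_zero, Nat.cast_one, div_one,
    mul_one] at h_cos
  rw [h_sin]
  exact h_cos.congr_fun fun n => by ring

lemma hasSum_H2n (k : Vec d) : HasSum (fun n => H2n d N R' Am (n + 1) k) (Hhat d N R' Am k) :=
  hasSum_sum fun ρ _ => (hasSum_four_mul_sin_half_sq (dotV k ρ)).smul_const (Am ρ)

lemma H2n_smul (n : ℕ) (t : ℝ) (k : Vec d) :
    H2n d N R' Am n (t • k) = t ^ (2 * n) • H2n d N R' Am n k := by
  simp only [H2n, Finset.smul_sum, smul_smul, dotV_smul]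
  exact Finset.sum_congr rfl fun ρ _ => by ring_nf

lemma contDiff_H2n {m : WithTop ℕ∞} (n : ℕ) : ContDiff ℝ m fun k => H2n d N R' Am n k :=
  ContDiff.sum fun ρ _ => (contDiff_const.mul ((contDiff_dotV ρ).pow _)).smul contDiff_const

lemma H2n_one (k : Vec d) : H2n d N R' Am 1 k = ∑ ρ ∈ R', dotV k ρ ^ 2 • Am ρ := by
  simp [H2n]

lemma norm_H2n_le (n : ℕ) (k : Vec d) :
    ‖H2n d N R' Am n k‖ ≤ ∑ ρ ∈ R', 2 * Real.exp |dotV k ρ| * ‖Am ρ‖ := by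
  refine (norm_sum_le _ _).trans (Finset.sum_le_sum fun ρ _ => ?_)
  rw [norm_smul]
  gcongr
  calc ‖(-1 : ℝ) ^ (n + 1) * 2 / ((2 * n).factorial : ℝ) * dotV k ρ ^ (2 * n)‖
      = 2 * (|dotV k ρ| ^ (2 * n) / ((2 * n).factorial : ℝ)) := by
        simp
        ring
    _ ≤ 2 * Real.exp |dotV k ρ| := by
        gcongr
        exact Real.pow_div_factorial_le_exp _ (abs_nonneg _) _

lemma tendsto_inv_sq_mul_four_mul_sin_half_sq (x : ℝ) :
    Tendsto (fun t : ℝ => (t ^ 2)⁻¹ * (4 * Real.sin (t * x / 2) ^ 2)) (𝓝[≠] 0) (𝓝 (x ^ 2)) := by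
  have h_deriv : HasDerivAt (fun t : ℝ => Real.sin (t * x / 2)) (x / 2) 0 := by
    simpa using (((hasDerivAt_id (0 : ℝ)).mul_const x).div_const 2).sin
  have h_slope := (hasDerivAt_iff_tendsto_slope_zero.mp h_deriv).pow 2 |>.const_mul 4
  convert h_slope using 2
  · simp
    ring
  · ring

lemma tendsto_inv_sq_smul_Hhat (k : Vec d) :
    Tendsto (fun t : ℝ => (t ^ 2)⁻¹ • Hhat d N R' Am (t • k)) (𝓝[≠] 0)
      (𝓝 (H2n d N R' Am 1 k)) := by
  simp only [H2n_one, Hhat, Finset.smul_sum, smul_smul, dotV_smul]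
  exact tendsto_finsetSum _ fun ρ _ =>
    (tendsto_inv_sq_mul_four_mul_sin_half_sq (dotV k ρ)).smul_const (Am ρ)

lemma le_dotV_H2n_one_mulVec {c₀ : ℝ}
    (hstab : ∀ (k : Vec d) (ξ : Vec N),
      c₀ * (∑ ρ ∈ R', 4 * Real.sin (dotV k ρ / 2) ^ 2) * (∑ i, (ξ i) ^ 2) ≤
        dotV ξ ((Hhat d N R' Am k).mulVec ξ)) (k : Vec d) (ξ : Vec N) :
    c₀ * (∑ ρ ∈ R', dotV k ρ ^ 2) * (∑ i, (ξ i) ^ 2) ≤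
      dotV ξ ((H2n d N R' Am 1 k).mulVec ξ) := by
  have h_left : Tendsto (fun t : ℝ => c₀ * (∑ ρ ∈ R', (t ^ 2)⁻¹ *
      (4 * Real.sin (t * dotV k ρ / 2) ^ 2)) * (∑ i, (ξ i) ^ 2)) (𝓝[≠] 0)
      (𝓝 (c₀ * (∑ ρ ∈ R', dotV k ρ ^ 2) * (∑ i, (ξ i) ^ 2))) :=
    ((tendsto_finsetSum _ fun ρ _ =>
      tendsto_inv_sq_mul_four_mul_sin_half_sq (dotV k ρ)).const_mul c₀).mul_const _
  have h_form : Continuous fun M : Matrix (Fin N) (Fin N) ℝ => dotV ξ (M.mulVec ξ) :=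
    continuous_const.dotProduct (continuous_id.matrix_mulVec continuous_const)
  have h_right := (h_form.tendsto _).comp (tendsto_inv_sq_smul_Hhat (R' := R') (Am := Am) k)
  refine le_of_tendsto_of_tendsto' h_left h_right fun t => ?_
  calc c₀ * (∑ ρ ∈ R', (t ^ 2)⁻¹ * (4 * Real.sin (t * dotV k ρ / 2) ^ 2)) * (∑ i, (ξ i) ^ 2)
      = (t ^ 2)⁻¹ * (c₀ * (∑ ρ ∈ R', 4 * Real.sin (dotV (t • k) ρ / 2) ^ 2) *
          (∑ i, (ξ i) ^ 2)) := by
        simp only [← Finset.mul_sum, dotV_smul]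
        ring
    _ ≤ (t ^ 2)⁻¹ * dotV ξ ((Hhat d N R' Am (t • k)).mulVec ξ) := by
        gcongr
        exact hstab (t • k) ξ
    _ = dotV ξ (((t ^ 2)⁻¹ • Hhat d N R' Am (t • k)).mulVec ξ) := by
        rw [Matrix.smul_mulVec]
        exact (dotProduct_smul (t ^ 2)⁻¹ ξ _).symm

lemma sum_dotV_sq_pos (hspan : Submodule.span ℝ (R' : Set (Vec d)) = ⊤) {k : Vec d} (hk : k ≠ 0) :
    0 < ∑ ρ ∈ R', dotV k ρ ^ 2 := by
  refine (Finset.sum_nonneg fun ρ _ => sq_nonneg _).lt_of_ne' fun h_zero => hk ?_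
  have h_dot : ∀ ρ ∈ R', dotV k ρ = 0 := by
    simpa [Finset.sum_eq_zero_iff_of_nonneg fun ρ _ => sq_nonneg (dotV k ρ)] using h_zero
  have h_ext : (dotProductBilin ℝ ℝ k : Vec d →ₗ[ℝ] ℝ) = 0 := LinearMap.ext_on hspan h_dot
  exact dotProduct_eq_zero k fun v => LinearMap.congr_fun h_ext v

lemma isUnit_det_of_dotProduct_mulVec_ne_zero {n K : Type*} [Fintype n] [DecidableEq n] [Field K]
    {M : Matrix n n K} (hM : ∀ v ≠ 0, v ⬝ᵥ M.mulVec v ≠ 0) : IsUnit M.det := by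
  refine isUnit_iff_ne_zero.mpr fun h_det => ?_
  obtain ⟨v, hv, hMv⟩ := Matrix.exists_mulVec_eq_zero_iff.mpr h_det
  exact hM v hv (by rw [hMv, dotProduct_zero])

lemma isUnit_det_H2n_one (hspan : Submodule.span ℝ (R' : Set (Vec d)) = ⊤) {c₀ : ℝ}
    (hc₀ : 0 < c₀) (hstab : ∀ (k : Vec d) (ξ : Vec N),
      c₀ * (∑ ρ ∈ R', 4 * Real.sin (dotV k ρ / 2) ^ 2) * (∑ i, (ξ i) ^ 2) ≤
        dotV ξ ((Hhat d N R' Am k).mulVec ξ)) {k : Vec d} (hk : k ≠ 0) :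
    IsUnit (H2n d N R' Am 1 k).det := by
  refine isUnit_det_of_dotProduct_mulVec_ne_zero fun ξ hξ => ne_of_gt ?_
  have hξ_pos : 0 < ∑ i, ξ i ^ 2 := by
    simpa [dotProduct, sq] using Matrix.dotProduct_self_star_pos_iff.mpr hξ
  exact (mul_pos (mul_pos hc₀ (sum_dotV_sq_pos hspan hk)) hξ_pos).trans_le
    (le_dotV_H2n_one_mulVec hstab k ξ)

end LatticeSymbol

section SymbolSeries

open PowerSeries Finset
open scoped Matrix.Norms.Frobenius

variable {d N : ℕ} (R' : Finset (Vec d)) (Am : Vec d → Matrix (Fin N) (Fin N) ℝ)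

/-- The expansion of `Ĥ(k)` as a formal power series; the exponent `m` carries the term
`Ĥ_{2m+2}(k)` of degree `2m + 2` in `k`. -/
def symbolSeries (k : Vec d) : (Matrix (Fin N) (Fin N) ℝ)⟦X⟧ :=
  PowerSeries.mk fun m => H2n d N R' Am (m + 1) k

/-- The remainder `Ĥ(k) Ĥ₂(k)⁻¹ - 1` as a formal power series. -/
def relativeRemainder (k : Vec d) : (Matrix (Fin N) (Fin N) ℝ)⟦X⟧ :=
  symbolSeries R' Am k * C (H2n d N R' Am 1 k)⁻¹ - 1

/-- The Neumann series `Ĥ₂(k)⁻¹ ∑ⱼ (1 - Ĥ(k) Ĥ₂(k)⁻¹) ^ j` as a formal power series; the exponent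
`m` carries `𝒜_{2m-2}(k)`. -/
def inverseSeries (k : Vec d) : (Matrix (Fin N) (Fin N) ℝ)⟦X⟧ :=
  C (H2n d N R' Am 1 k)⁻¹ * geomSeries (-relativeRemainder R' Am k)

variable {R' Am}

lemma coeff_relativeRemainder_of_ne_zero {a : ℕ} (ha : a ≠ 0) (k : Vec d) :
    coeff a (relativeRemainder R' Am k) = H2n d N R' Am (a + 1) k * (H2n d N R' Am 1 k)⁻¹ := by
  simp [relativeRemainder, symbolSeries, coeff_one, ha]

lemma coeff_zero_relativeRemainder {k : Vec d} (hk : IsUnit (H2n d N R' Am 1 k).det) :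
    coeff 0 (relativeRemainder R' Am k) = 0 := by
  rw [relativeRemainder, map_sub, coeff_mul_C, symbolSeries, coeff_mk, zero_add,
    Matrix.mul_nonsing_inv _ hk, coeff_zero_one, sub_self]

lemma symbolSeries_mul_inverseSeries {k : Vec d} (hk : IsUnit (H2n d N R' Am 1 k).det) :
    symbolSeries R' Am k * inverseSeries R' Am k = 1 := by
  have h_coeff : coeff 0 (-relativeRemainder R' Am k) = 0 := by
    rw [map_neg, coeff_zero_relativeRemainder hk, neg_zero]
  rw [← one_sub_mul_geomSeries h_coeff, inverseSeries, ← mul_assoc, relativeRemainder,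
    sub_neg_eq_add, add_sub_cancel]

lemma calA_eq_sum_evenCompositions (n : ℕ) (k : Vec d) :
    calA d N R' Am n k = ∑ j ∈ Icc 1 (n + 1), (-1 : ℝ) ^ j • ∑ α ∈ evenCompositions j n,
      (H2n d N R' Am 1 k)⁻¹ *
        (List.ofFn fun i => H2n d N R' Am (α i / 2) k * (H2n d N R' Am 1 k)⁻¹).prod := by
  simp only [calA, evenCompositions, sum_filter]

lemma calA_eq {k : Vec d} (hk : IsUnit (H2n d N R' Am 1 k).det) (n : ℕ) :
    calA d N R' Am n k =
      (H2n d N R' Am 1 k)⁻¹ * coeff (n + 1) (geomSeries (-relativeRemainder R' Am k)) := by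
  set E := relativeRemainder R' Am k
  have hE : coeff 0 E = 0 := coeff_zero_relativeRemainder hk
  have coeff_neg_pow (j : ℕ) : coeff (n + 1) ((-E) ^ j) = (-1 : ℝ) ^ j • coeff (n + 1) (E ^ j) := by
    rcases j.even_or_odd with h | h <;> simp [h.neg_pow]
  have coeff_zero_term : coeff (n + 1) ((-E) ^ 0) = 0 := by simp [coeff_one]
  rw [calA_eq_sum_evenCompositions, geomSeries, coeff_mk, map_sum, range_eq_Ico,
    sum_eq_sum_Ico_succ_bot (Nat.succ_pos _), coeff_zero_term, zero_add, mul_sum]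
  refine sum_congr rfl fun j _ => ?_
  rw [coeff_neg_pow, mul_smul_comm, coeff_pow_eq_sum_ne_zero hE, mul_sum,
    sum_evenCompositions j n fun β => (H2n d N R' Am 1 k)⁻¹ *
      (List.ofFn fun i => H2n d N R' Am (β i) k * (H2n d N R' Am 1 k)⁻¹).prod]
  congr 1
  refine sum_congr rfl fun g hg => ?_
  simp only [E, coeff_relativeRemainder_of_ne_zero ((mem_filter.mp hg).2 _)]

lemma coeff_inverseSeries {k : Vec d} (hk : IsUnit (H2n d N R' Am 1 k).det) (m : ℕ) :
    coeff m (inverseSeries R' Am k) =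
      if m = 0 then (H2n d N R' Am 1 k)⁻¹ else calA d N R' Am (m - 1) k := by
  rw [inverseSeries, coeff_C_mul]
  rcases m with _ | m
  · simp [geomSeries]
  · simp [calA_eq hk]

lemma inv_H2n_one_smul {t : ℝ} (ht : t ≠ 0) {k : Vec d} (hk : IsUnit (H2n d N R' Am 1 k).det) :
    (H2n d N R' Am 1 (t • k))⁻¹ = (t ^ 2)⁻¹ • (H2n d N R' Am 1 k)⁻¹ := by
  rw [H2n_smul, mul_one]
  exact Matrix.inv_smul' _ (Units.mk0 (t ^ 2) (pow_ne_zero 2 ht)) hk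

lemma isUnit_det_H2n_one_smul {t : ℝ} (ht : t ≠ 0) {k : Vec d}
    (hk : IsUnit (H2n d N R' Am 1 k).det) : IsUnit (H2n d N R' Am 1 (t • k)).det := by
  rw [H2n_smul, Matrix.det_smul]
  exact ((IsUnit.mk0 t ht).pow _ |>.pow _).mul hk

lemma coeff_relativeRemainder_smul {t : ℝ} (ht : t ≠ 0) {k : Vec d}
    (hk : IsUnit (H2n d N R' Am 1 k).det) (a : ℕ) :
    coeff a (relativeRemainder R' Am (t • k)) =
      (t ^ 2) ^ a • coeff a (relativeRemainder R' Am k) := by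
  rcases eq_or_ne a 0 with rfl | ha
  · rw [coeff_zero_relativeRemainder hk,
      coeff_zero_relativeRemainder (isUnit_det_H2n_one_smul ht hk), smul_zero]
  · rw [coeff_relativeRemainder_of_ne_zero ha, coeff_relativeRemainder_of_ne_zero ha, H2n_smul,
      inv_H2n_one_smul ht hk, smul_mul_smul_comm]
    congr 1
    field_simp
    ring

lemma calA_smul {t : ℝ} (ht : t ≠ 0) {k : Vec d} (hk : IsUnit (H2n d N R' Am 1 k).det) (n : ℕ) :
    calA d N R' Am n (t • k) = t ^ (2 * n) • calA d N R' Am n k := by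
  have h_coeff (a : ℕ) : coeff a (-relativeRemainder R' Am (t • k)) =
      (t ^ 2) ^ a • coeff a (-relativeRemainder R' Am k) := by
    rw [map_neg, map_neg, coeff_relativeRemainder_smul ht hk, smul_neg]
  rw [calA_eq (isUnit_det_H2n_one_smul ht hk), calA_eq hk, inv_H2n_one_smul ht hk,
    coeff_geomSeries_of_coeff_eq_smul h_coeff, smul_mul_smul_comm]
  congr 1
  field_simp
  ring

variable {s : Set (Vec d)} {n : WithTop ℕ∞}

lemma contDiffOn_inv_H2n_one (hs : ∀ k ∈ s, IsUnit (H2n d N R' Am 1 k).det) :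
    ContDiffOn ℝ n (fun k => (H2n d N R' Am 1 k)⁻¹) s := fun k hk => by
  obtain ⟨u, hu⟩ := (Matrix.isUnit_iff_isUnit_det _).mpr (hs k hk)
  have h_inv : ContDiffAt ℝ n Ring.inverse (H2n d N R' Am 1 k) := hu ▸ contDiffAt_ringInverse ℝ u
  simp only [Matrix.nonsing_inv_eq_ringInverse]
  exact (h_inv.comp k (contDiff_H2n 1).contDiffAt).contDiffWithinAt

lemma contDiffOn_coeff_relativeRemainder (hs : ∀ k ∈ s, IsUnit (H2n d N R' Am 1 k).det) (a : ℕ) :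
    ContDiffOn ℝ n (fun k => coeff a (relativeRemainder R' Am k)) s := by
  simp only [relativeRemainder, map_sub, coeff_mul_C, symbolSeries, coeff_mk]
  exact ((contDiff_H2n _).contDiffOn.mul (contDiffOn_inv_H2n_one hs)).sub contDiffOn_const

lemma contDiffOn_calA (hs : ∀ k ∈ s, IsUnit (H2n d N R' Am 1 k).det) (m : ℕ) :
    ContDiffOn ℝ n (fun k => calA d N R' Am m k) s := by
  have h_neg (a : ℕ) : ContDiffOn ℝ n (fun k => coeff a (-relativeRemainder R' Am k)) s := by
    simpa only [map_neg] using (contDiffOn_coeff_relativeRemainder hs a).neg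
  exact ((contDiffOn_inv_H2n_one hs).mul (contDiffOn_coeff_geomSeries h_neg (m + 1))).congr
    fun k hk => calA_eq (hs k hk) m

lemma exists_norm_coeff_relativeRemainder_le_of_norm_eq_one
    (hH2 : ∀ k : Vec d, k ≠ 0 → IsUnit (H2n d N R' Am 1 k).det) :
    ∃ K : ℝ, 0 ≤ K ∧ ∀ k : Vec d, ‖k‖ = 1 → ∀ a, ‖coeff a (relativeRemainder R' Am k)‖ ≤ K := by
  have hH2_sphere : ∀ k ∈ Metric.sphere (0 : Vec d) 1, IsUnit (H2n d N R' Am 1 k).det :=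
    fun k hk => hH2 k (ne_zero_of_mem_unit_sphere ⟨k, hk⟩)
  have h_cont : ContinuousOn (fun k : Vec d => (∑ ρ ∈ R', 2 * Real.exp |dotV k ρ| * ‖Am ρ‖) *
      ‖(H2n d N R' Am 1 k)⁻¹‖) (Metric.sphere 0 1) := by
    have h_inv := (contDiffOn_inv_H2n_one (n := 0) hH2_sphere).continuousOn
    have h_dot (ρ : Vec d) := (contDiff_dotV ρ (n := 0)).continuous
    exact (Continuous.continuousOn (by fun_prop)).mul h_inv.norm
  obtain ⟨K, hK⟩ := (isCompact_sphere (0 : Vec d) 1).exists_bound_of_continuousOn h_cont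
  refine ⟨max K 0, le_max_right _ _, fun k hk a => ?_⟩
  have hk_mem : k ∈ Metric.sphere (0 : Vec d) 1 := mem_sphere_zero_iff_norm.mpr hk
  rcases eq_or_ne a 0 with rfl | ha
  · simp [coeff_zero_relativeRemainder (hH2_sphere k hk_mem)]
  · rw [coeff_relativeRemainder_of_ne_zero ha]
    grw [norm_mul_le, norm_H2n_le, ← le_max_left K 0, ← hK k hk_mem]
    exact le_abs_self _

lemma exists_norm_coeff_relativeRemainder_le
    (hH2 : ∀ k : Vec d, k ≠ 0 → IsUnit (H2n d N R' Am 1 k).det) :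
    ∃ K : ℝ, 0 ≤ K ∧ ∀ k : Vec d, k ≠ 0 → ∀ a,
      ‖coeff a (relativeRemainder R' Am k)‖ ≤ K * (‖k‖ ^ 2) ^ a := by
  obtain ⟨K, hK0, hK⟩ := exists_norm_coeff_relativeRemainder_le_of_norm_eq_one hH2
  refine ⟨K, hK0, fun k hk a => ?_⟩
  have hk_norm : ‖k‖ ≠ 0 := norm_ne_zero_iff.mpr hk
  set e : Vec d := ‖k‖⁻¹ • k
  have he : ‖e‖ = 1 := norm_smul_inv_norm hk
  have hk_eq : k = ‖k‖ • e := (smul_inv_smul₀ hk_norm k).symm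
  calc ‖coeff a (relativeRemainder R' Am k)‖
      = (‖k‖ ^ 2) ^ a * ‖coeff a (relativeRemainder R' Am e)‖ := by
        have he_unit := hH2 e (norm_ne_zero_iff.mp (he ▸ one_ne_zero))
        conv_lhs => rw [hk_eq, coeff_relativeRemainder_smul hk_norm he_unit]
        rw [norm_smul, Real.norm_of_nonneg (by positivity)]
    _ ≤ K * (‖k‖ ^ 2) ^ a := by
        grw [hK e he a, mul_comm]

lemma exists_summable_norm_coeff_inverseSeries
    (hH2 : ∀ k : Vec d, k ≠ 0 → IsUnit (H2n d N R' Am 1 k).det) :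
    ∃ ε : ℝ, 0 < ε ∧ ∀ k : Vec d, k ≠ 0 → ‖k‖ < ε →
      Summable fun m => ‖coeff m (inverseSeries R' Am k)‖ := by
  obtain ⟨K, hK0, hK⟩ := exists_norm_coeff_relativeRemainder_le hH2
  refine ⟨√(K + 1)⁻¹, by positivity, fun k hk hkε => ?_⟩
  have h_small : (K + 1) * ‖k‖ ^ 2 < 1 := by
    rw [Real.lt_sqrt (norm_nonneg k)] at hkε
    field_simp at hkε
    linarith
  have h_coeff_zero : coeff 0 (-relativeRemainder R' Am k) = 0 := by
    rw [map_neg, coeff_zero_relativeRemainder (hH2 k hk), neg_zero]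
  obtain ⟨h_summable, h_lt_one⟩ := summable_and_tsum_lt_one_of_le_geometric
    (f := fun a => ‖coeff a (-relativeRemainder R' Am k)‖) (fun _ => norm_nonneg _)
    (by rw [h_coeff_zero, norm_zero]) (fun a => by simpa using hK k hk a) hK0 (sq_nonneg _) h_small
  have h_geom := summable_norm_coeff_of_one_sub_mul_eq_one (one_sub_mul_geomSeries h_coeff_zero)
    h_summable h_lt_one
  simp only [inverseSeries, coeff_C_mul]
  exact .of_nonneg_of_le (fun _ => norm_nonneg _) (fun m => norm_mul_le _ _)
    (h_geom.mul_left ‖(H2n d N R' Am 1 k)⁻¹‖)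

lemma summable_norm_H2n (k : Vec d) : Summable fun n => ‖H2n d N R' Am (n + 1) k‖ :=
  (hasSum_H2n k).summable.norm

lemma isUnit_det_Hhat_and_hasSum_inverseSeries {k : Vec d}
    (hk : IsUnit (H2n d N R' Am 1 k).det)
    (h : Summable fun m => ‖coeff m (inverseSeries R' Am k)‖) :
    IsUnit (Hhat d N R' Am k).det ∧
      HasSum (fun m => coeff m (inverseSeries R' Am k)) (Hhat d N R' Am k)⁻¹ := by
  have h_hasSum := h.of_norm.hasSum
  have h_mul : Hhat d N R' Am k * ∑' m, coeff m (inverseSeries R' Am k) = 1 :=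
    mul_eq_one_of_hasSum_coeff (symbolSeries_mul_inverseSeries hk)
      (by simpa only [symbolSeries, coeff_mk] using summable_norm_H2n k) h
      (by simp only [symbolSeries, coeff_mk]; exact hasSum_H2n k) h_hasSum
  exact ⟨Matrix.isUnit_det_of_right_inverse h_mul, Matrix.inv_eq_right_inv h_mul ▸ h_hasSum⟩

end SymbolSeries

theorem fourier_multiplier_series_inversion_general
    (d N : ℕ) (R' : Finset (Vec d)) (Am : Vec d → Matrix (Fin N) (Fin N) ℝ)
    (hH2 : ∀ k : Vec d, k ≠ 0 → IsUnit (H2n d N R' Am 1 k).det) :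
    (∀ k : Vec d,
      Summable (fun n : ℕ => mnormM (H2n d N R' Am (n + 1) k)) ∧
      ∀ i j : Fin N,
        HasSum (fun n : ℕ => H2n d N R' Am (n + 1) k i j) (Hhat d N R' Am k i j)) ∧
    ((∀ i j : Fin N,
        ContDiffOn ℝ (⊤ : ℕ∞) (fun k => (H2n d N R' Am 1 k)⁻¹ i j) {x : Vec d | x ≠ 0}) ∧
     (∀ t : ℝ, 0 < t → ∀ k : Vec d, k ≠ 0 →
        (H2n d N R' Am 1 (t • k))⁻¹ = (t ^ 2)⁻¹ • (H2n d N R' Am 1 k)⁻¹) ∧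
     (∀ (n : ℕ) (i j : Fin N),
        ContDiffOn ℝ (⊤ : ℕ∞) (fun k => calA d N R' Am n k i j) {x : Vec d | x ≠ 0}) ∧
     (∀ (n : ℕ) (t : ℝ), 0 < t → ∀ k : Vec d, k ≠ 0 →
        calA d N R' Am n (t • k) = t ^ (2 * n) • calA d N R' Am n k)) ∧
    (∃ ε : ℝ, 0 < ε ∧ ∀ k : Vec d, k ≠ 0 → enorm k < ε →
      IsUnit (Hhat d N R' Am k).det ∧
      Summable (fun n : ℕ =>
        mnormM (if n = 0 then (H2n d N R' Am 1 k)⁻¹ else calA d N R' Am (n - 1) k)) ∧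
      ∀ i j : Fin N,
        HasSum (fun n : ℕ =>
          (if n = 0 then (H2n d N R' Am 1 k)⁻¹ else calA d N R' Am (n - 1) k) i j)
          ((Hhat d N R' Am k)⁻¹ i j)) := by
  refine ⟨fun k => ⟨?_, hasSum_entry (hasSum_H2n k)⟩,
    ⟨contDiffOn_entry (contDiffOn_inv_H2n_one hH2),
      fun t ht k hk => inv_H2n_one_smul ht.ne' (hH2 k hk),
      fun n => contDiffOn_entry (contDiffOn_calA hH2 n),
      fun n t ht k hk => calA_smul ht.ne' (hH2 k hk) n⟩, ?_⟩
  · simpa only [mnormM_eq_norm] using summable_norm_H2n k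
  · obtain ⟨ε, hε, h_summable⟩ := exists_summable_norm_coeff_inverseSeries hH2
    refine ⟨ε, hε, fun k hk hkε => ?_⟩
    have h_abs := h_summable k hk ((norm_le_enorm k).trans_lt hkε)
    obtain ⟨h_unit, h_sum⟩ := isUnit_det_Hhat_and_hasSum_inverseSeries (hH2 k hk) h_abs
    simp only [coeff_inverseSeries (hH2 k hk)] at h_abs h_sum
    exact ⟨h_unit, by simpa only [mnormM_eq_norm] using h_abs, hasSum_entry h_sum⟩

/-- Series inversion of the lattice Fourier multiplier. -/
theorem fourier_multiplier_series_inversion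
    (d N : ℕ) (hd : 1 ≤ d) (hN : 1 ≤ N)
    (R' : Finset (Vec d)) (hR0 : (0 : Vec d) ∉ R')
    (hRsym : ∀ ρ ∈ R', -ρ ∈ R')
    (hRspan : Submodule.span ℝ (R' : Set (Vec d)) = ⊤)
    (Am : Vec d → Matrix (Fin N) (Fin N) ℝ)
    (hAmSym : ∀ (ρ : Vec d) (i j : Fin N), Am ρ i j = Am ρ j i)
    (hAmEven : ∀ ρ ∈ R', Am ρ = Am (-ρ))
    (c₀ : ℝ) (hc₀ : 0 < c₀)
    (hstab : ∀ (k : Vec d) (ξ : Vec N),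
      c₀ * (∑ ρ ∈ R', 4 * Real.sin (dotV k ρ / 2) ^ 2) * (∑ i, (ξ i) ^ 2) ≤
        dotV ξ ((Hhat d N R' Am k).mulVec ξ)) :
    -- (i) the series of homogeneous terms converges absolutely to Ĥ
    (∀ k : Vec d,
      Summable (fun n : ℕ => mnormM (H2n d N R' Am (n + 1) k)) ∧
      ∀ i j : Fin N,
        HasSum (fun n : ℕ => H2n d N R' Am (n + 1) k i j) (Hhat d N R' Am k i j)) ∧
    -- (ii) invertibility of Ĥ₂ away from 0, smoothness and homogeneity of the 𝒜's
    ((∀ k : Vec d, k ≠ 0 → IsUnit (H2n d N R' Am 1 k).det) ∧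
     (∀ i j : Fin N,
        ContDiffOn ℝ (⊤ : ℕ∞) (fun k => (H2n d N R' Am 1 k)⁻¹ i j)
          {x : Vec d | x ≠ 0}) ∧
     (∀ t : ℝ, 0 < t → ∀ k : Vec d, k ≠ 0 →
        (H2n d N R' Am 1 (t • k))⁻¹ = (t ^ 2)⁻¹ • (H2n d N R' Am 1 k)⁻¹) ∧
     (∀ (n : ℕ) (i j : Fin N),
        ContDiffOn ℝ (⊤ : ℕ∞) (fun k => calA d N R' Am n k i j)
          {x : Vec d | x ≠ 0}) ∧
     (∀ (n : ℕ) (t : ℝ), 0 < t → ∀ k : Vec d, k ≠ 0 →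
        calA d N R' Am n (t • k) = (t ^ (2 * n)) • calA d N R' Am n k)) ∧
    -- (iii) the series inverts Ĥ near k = 0
    (∃ ε : ℝ, 0 < ε ∧ ∀ k : Vec d, k ≠ 0 → enorm k < ε →
      IsUnit (Hhat d N R' Am k).det ∧
      Summable (fun n : ℕ =>
        mnormM (if n = 0 then (H2n d N R' Am 1 k)⁻¹ else calA d N R' Am (n - 1) k)) ∧
      ∀ i j : Fin N,
        HasSum (fun n : ℕ =>
          (if n = 0 then (H2n d N R' Am 1 k)⁻¹ else calA d N R' Am (n - 1) k) i j)
          ((Hhat d N R' Am k)⁻¹ i j)) := by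
  have hH2 : ∀ k : Vec d, k ≠ 0 → IsUnit (H2n d N R' Am 1 k).det :=
    fun k hk => isUnit_det_H2n_one hRspan hc₀ hstab hk
  obtain ⟨h_i, h_ii, h_iii⟩ := fourier_multiplier_series_inversion_general d N R' Am hH2
  exact ⟨h_i, ⟨hH2, h_ii⟩, h_iii⟩

end Defect
end
end

section
/- (Renormalized oscillatory integral identity for the kernels J.) For every integer h ≥ 1, every δ > 0, and every real w ≠ 0, the following identity holds in ℂ: (1/h!)·(iw)^h·(−Log(−iw) + ∑_{j=1}^{h} 1/j) = ∫_δ^∞ r^{−h−1} e^{iwr} dr + (i^h/h!)·w^h·(γ + log δ) − ∑_{k=0}^{h−1} (i^k/k!)·w^k·δ^{k−h}/(h−k) + δ·(iw)^{h+1}·∑_{k=0}^{∞} (δ i w)^k / ((k+1)·(k+h+1)!), where the integral converges absolutely and the power series converges absolutely. -/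
noncomputable section

open scoped BigOperators
open MeasureTheory Complex

/-!
Scaling to `δ = 1` and putting `u = iw` turns the identity into the classical expansion of the
exponential integral `E_{h+1}(-u)` at the origin. On `Re u < 0` the integrals, their logarithmic
parts and the entire series all satisfy `F_{h+1}' = F_h`, hence so do the defects `D_h` of the
expansion, and `D_0' = 0`. Since `D_0 → 0` along the negative axis, by
`∫_0^∞ log t e^{-t} dt = -γ`, and `D_{h+1}` vanishes at the origin, every `D_h` is zero. For `h ≥ 1`
the integral is continuous up to the imaginary axis, where the identity follows in the limit.
-/

section

open Filter Topology Set
open scoped Nat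

local notation "γ" => Real.eulerMascheroniConstant

theorem tendsto_setIntegral_Ioi_nhdsGT {E : Type*} [NormedAddCommGroup E] [NormedSpace ℝ E]
    {f : ℝ → E} {a : ℝ} (hf : IntegrableOn f (Ioi a)) :
    Tendsto (fun x => ∫ t in Ioi x, f t) (𝓝[>] a) (𝓝 (∫ t in Ioi a, f t)) := by
  have hcover := aecover_Ioi_of_Ioi (μ := volume) (tendsto_nhdsWithin_of_tendsto_nhds tendsto_id :
    Tendsto (fun x : ℝ => x) (𝓝[>] a) (𝓝 a))
  refine (hcover.integral_tendsto_of_countably_generated hf).congr' ?_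
  filter_upwards [self_mem_nhdsWithin] with x hx
  rw [Measure.restrict_restrict measurableSet_Ioi,
    inter_eq_left.2 (Ioi_subset_Ioi (mem_Ioi.1 hx).le)]

theorem integrableOn_log_mul_exp_neg :
    IntegrableOn (fun t : ℝ => Real.log t * Real.exp (-t)) (Ioi 0) := by
  have hdom := (Real.GammaIntegral_convergent (s := 2) two_pos).add
    ((Real.GammaIntegral_convergent (s := 1 / 2) one_half_pos).const_mul 2)
  refine hdom.mono' (by fun_prop) ?_
  filter_upwards [ae_restrict_mem measurableSet_Ioi] with t (ht : 0 < t)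
  have hupper : Real.log t ≤ t := Real.log_le_self ht.le
  have hlower : -Real.log t ≤ 2 * t ^ (-(1 / 2) : ℝ) := by
    have := Real.log_le_rpow_div (inv_nonneg.2 ht.le) one_half_pos
    rw [Real.log_inv, Real.inv_rpow ht.le, ← Real.rpow_neg ht.le] at this
    linarith
  have habs : |Real.log t| ≤ t + 2 * t ^ (-(1 / 2) : ℝ) :=
    abs_le.2 ⟨by linarith, by linarith [Real.rpow_nonneg ht.le (-(1 / 2))]⟩
  calc ‖Real.log t * Real.exp (-t)‖ = |Real.log t| * Real.exp (-t) := by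
        rw [norm_mul, Real.norm_eq_abs, Real.norm_eq_abs, Real.abs_exp]
    _ ≤ (t + 2 * t ^ (-(1 / 2) : ℝ)) * Real.exp (-t) := by gcongr
    _ = _ := by norm_num; ring

theorem integral_log_mul_exp_neg : ∫ t in Ioi (0 : ℝ), Real.log t * Real.exp (-t) = -γ := by
  have hderiv : HasDerivAt Complex.Gamma
      (∫ t : ℝ in Ioi 0, (t : ℂ) ^ ((1 : ℂ) - 1) * (Real.log t * Real.exp (-t))) 1 := by
    refine (Complex.hasDerivAt_GammaIntegral (by simp)).congr_of_eventuallyEq ?_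
    filter_upwards [continuous_re.continuousAt.eventually_const_lt (by simp : 0 < (1 : ℂ).re)]
      with s hs using Complex.Gamma_eq_integral hs
  have hcomplex := hderiv.unique Complex.hasDerivAt_Gamma_one
  simp only [sub_self, cpow_zero, one_mul, ← ofReal_mul] at hcomplex
  rw [integral_complex_ofReal] at hcomplex
  exact_mod_cast hcomplex

theorem integrableOn_inv_mul_exp_neg {x : ℝ} (hx : 0 < x) :
    IntegrableOn (fun t : ℝ => t⁻¹ * Real.exp (-t)) (Ioi x) := by
  refine ((integrableOn_exp_neg_Ioi x).const_mul x⁻¹).mono' (by fun_prop) ?_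
  filter_upwards [ae_restrict_mem measurableSet_Ioi] with t (ht : x < t)
  rw [norm_mul, Real.norm_eq_abs, Real.norm_eq_abs, Real.abs_exp,
    abs_of_pos (inv_pos.2 (hx.trans ht))]
  gcongr

theorem integral_Ioi_inv_mul_exp_neg {x : ℝ} (hx : 0 < x) :
    ∫ t in Ioi x, t⁻¹ * Real.exp (-t) =
      (∫ t in Ioi x, Real.log t * Real.exp (-t)) - Real.log x * Real.exp (-x) := by
  have hlog := integrableOn_log_mul_exp_neg.mono_set (Ioi_subset_Ioi hx.le)
  have hinv := integrableOn_inv_mul_exp_neg hx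
  have hderiv : ∀ t ∈ Ici x, HasDerivAt (fun t => Real.log t * Real.exp (-t))
      (t⁻¹ * Real.exp (-t) - Real.log t * Real.exp (-t)) t := fun t ht =>
    ((Real.hasDerivAt_log (hx.trans_le ht).ne').fun_mul (hasDerivAt_neg t).exp).congr_deriv
      (by ring)
  have hparts := integral_Ioi_of_hasDerivAt_of_tendsto' hderiv (hinv.sub hlog)
    (tendsto_zero_of_hasDerivAt_of_integrableOn_Ioi
      (fun t ht => hderiv t (Ioi_subset_Ici_self ht)) (hinv.sub hlog) hlog)
  rw [integral_sub hinv hlog] at hparts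
  linarith

theorem tendsto_log_mul_one_sub_exp_neg :
    Tendsto (fun x : ℝ => Real.log x * (1 - Real.exp (-x))) (𝓝[>] 0) (𝓝 0) := by
  have hbound : Tendsto (fun x : ℝ => |x * Real.log x|) (𝓝[>] 0) (𝓝 0) := by
    simpa using (Real.continuous_mul_log.abs.tendsto 0).mono_left nhdsWithin_le_nhds
  refine squeeze_zero_norm' ?_ hbound
  filter_upwards [self_mem_nhdsWithin] with x (hx : 0 < x)
  have hnonneg : 0 ≤ 1 - Real.exp (-x) := by simpa using hx.le
  have hle : 1 - Real.exp (-x) ≤ x := by linarith [Real.add_one_le_exp (-x)]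
  rw [Real.norm_eq_abs, abs_mul, abs_mul, mul_comm, abs_of_nonneg hnonneg, abs_of_pos hx]
  gcongr

theorem tendsto_integral_Ioi_inv_mul_exp_neg_add_log :
    Tendsto (fun x => (∫ t in Ioi x, t⁻¹ * Real.exp (-t)) + Real.log x) (𝓝[>] 0) (𝓝 (-γ)) := by
  have hlim := (tendsto_setIntegral_Ioi_nhdsGT integrableOn_log_mul_exp_neg).add
    tendsto_log_mul_one_sub_exp_neg
  rw [integral_log_mul_exp_neg, add_zero] at hlim
  refine hlim.congr' ?_
  filter_upwards [self_mem_nhdsWithin] with x hx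
  rw [integral_Ioi_inv_mul_exp_neg hx]
  ring

theorem norm_inv_pow_mul_cexp {t : ℝ} (ht : 0 ≤ t) (n : ℕ) (u : ℂ) :
    ‖((t : ℂ) ^ n)⁻¹ * cexp (u * t)‖ = (t ^ n)⁻¹ * Real.exp (u.re * t) := by
  rw [norm_mul, norm_inv, norm_pow, norm_real, Real.norm_of_nonneg ht, norm_exp, re_mul_ofReal]

theorem norm_inv_pow_mul_cexp_le {t : ℝ} (ht : 0 ≤ t) (n : ℕ) {u : ℂ} (hu : u.re ≤ 0) :
    ‖((t : ℂ) ^ n)⁻¹ * cexp (u * t)‖ ≤ (t ^ n)⁻¹ := by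
  rw [norm_inv_pow_mul_cexp ht]
  exact mul_le_of_le_one_right (by positivity)
    (Real.exp_le_one_iff.2 (mul_nonpos_of_nonpos_of_nonneg hu ht))

theorem integrableOn_Ioi_inv_pow {n : ℕ} (hn : 2 ≤ n) {δ : ℝ} (hδ : 0 < δ) :
    IntegrableOn (fun t : ℝ => (t ^ n)⁻¹) (Ioi δ) := by
  have hn' : -(n : ℝ) < -1 := neg_lt_neg (by exact_mod_cast hn)
  refine (integrableOn_Ioi_rpow_of_lt hn' hδ).congr_fun (fun t ht => ?_) measurableSet_Ioi
  simp only [Real.rpow_neg (hδ.trans ht).le, Real.rpow_natCast]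

theorem integrableOn_inv_pow_mul_cexp_of_re_nonpos {n : ℕ} (hn : 2 ≤ n) {δ : ℝ} (hδ : 0 < δ)
    {u : ℂ} (hu : u.re ≤ 0) :
    IntegrableOn (fun t : ℝ => ((t : ℂ) ^ n)⁻¹ * cexp (u * t)) (Ioi δ) := by
  refine (integrableOn_Ioi_inv_pow hn hδ).mono' (by fun_prop) ?_
  filter_upwards [ae_restrict_mem measurableSet_Ioi] with t ht using
    norm_inv_pow_mul_cexp_le (hδ.trans ht).le n hu

theorem integrableOn_inv_pow_mul_cexp_of_re_neg (n : ℕ) {δ : ℝ} (hδ : 0 < δ) {u : ℂ}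
    (hu : u.re < 0) : IntegrableOn (fun t : ℝ => ((t : ℂ) ^ n)⁻¹ * cexp (u * t)) (Ioi δ) := by
  refine ((integrableOn_exp_mul_Ioi hu δ).const_mul (δ ^ n)⁻¹).mono' (by fun_prop) ?_
  filter_upwards [ae_restrict_mem measurableSet_Ioi] with t (ht : δ < t)
  rw [norm_inv_pow_mul_cexp (hδ.trans ht).le]
  gcongr

/-- The exponential integral `E_n(-u) = ∫_1^∞ t^{-n} e^{ut} dt`. The classical argument is `-u`;
with this sign `E_{n+1}' = E_n`, and it is an absolutely convergent integral for `Re u < 0`, and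
also on the imaginary axis if `n ≥ 2`. -/
def exponentialIntegral (n : ℕ) (u : ℂ) : ℂ :=
  ∫ t in Ioi (1 : ℝ), ((t : ℂ) ^ n)⁻¹ * cexp (u * t)

theorem exponentialIntegral_zero {u : ℂ} (hu : u.re < 0) :
    exponentialIntegral 0 u = -cexp u / u := by
  simpa [exponentialIntegral] using integral_exp_mul_complex_Ioi hu 1

theorem exponentialIntegral_add_two_apply_zero (n : ℕ) :
    exponentialIntegral (n + 2) 0 = ((n : ℂ) + 1)⁻¹ := by
  have hexponent : (-((n + 2 : ℕ) : ℂ)).re < -1 := by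
    rw [neg_re, natCast_re]; push_cast; linarith [n.cast_nonneg (α := ℝ)]
  have hint := integral_Ioi_cpow_of_lt hexponent one_pos
  simp only [cpow_neg, cpow_natCast, ofReal_one, one_cpow] at hint
  rw [exponentialIntegral]
  simp only [zero_mul, Complex.exp_zero, mul_one, hint]
  rw [neg_div, ← div_neg, one_div]
  congr 1
  push_cast
  ring

theorem hasDerivAt_exponentialIntegral (n : ℕ) {u : ℂ} (hu : u.re < 0) :
    HasDerivAt (exponentialIntegral (n + 1)) (exponentialIntegral n u) u := by
  have hnhds : {v : ℂ | v.re < u.re / 2} ∈ 𝓝 u :=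
    continuous_re.continuousAt.eventually_lt_const (by linarith)
  refine (hasDerivAt_integral_of_dominated_loc_of_deriv_le hnhds
    (F := fun v t => ((t : ℂ) ^ (n + 1))⁻¹ * cexp (v * t))
    (F' := fun v t => ((t : ℂ) ^ n)⁻¹ * cexp (v * t))
    (bound := fun t => Real.exp (u.re / 2 * t)) (.of_forall fun v => by fun_prop)
    (integrableOn_inv_pow_mul_cexp_of_re_neg (n + 1) one_pos hu) (by fun_prop) ?_
    (integrableOn_exp_mul_Ioi (by linarith) 1) ?_).2
  all_goals filter_upwards [ae_restrict_mem measurableSet_Ioi] with t (ht : 1 < t) v hv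
  · rw [norm_inv_pow_mul_cexp (by linarith)]
    have hle : v.re ≤ u.re / 2 := le_of_lt hv
    calc (t ^ n)⁻¹ * Real.exp (v.re * t) ≤ 1 * Real.exp (v.re * t) := by
          gcongr; exact inv_le_one_of_one_le₀ (one_le_pow₀ ht.le)
      _ ≤ Real.exp (u.re / 2 * t) := by
          rw [one_mul]
          exact Real.exp_le_exp.2 (mul_le_mul_of_nonneg_right hle (by linarith))
  · have ht0 : (t : ℂ) ≠ 0 := ofReal_ne_zero.2 (by linarith)
    refine ((hasDerivAt_mul_const (t : ℂ)).cexp.const_mul ((t : ℂ) ^ (n + 1))⁻¹).congr_deriv ?_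
    field_simp
    ring

theorem continuousOn_exponentialIntegral {n : ℕ} (hn : 2 ≤ n) :
    ContinuousOn (exponentialIntegral n) {u | u.re ≤ 0} := by
  refine continuousOn_of_dominated (fun u _ => by fun_prop) (fun u hu => ?_)
    (integrableOn_Ioi_inv_pow hn one_pos) (.of_forall fun t => by fun_prop)
  filter_upwards [ae_restrict_mem measurableSet_Ioi] with t ht using
    norm_inv_pow_mul_cexp_le (one_pos.trans ht).le n hu

theorem integral_Ioi_inv_pow_mul_cexp (n : ℕ) {δ : ℝ} (hδ : 0 < δ) (u : ℂ) :
    ∫ t in Ioi δ, ((t : ℂ) ^ (n + 1))⁻¹ * cexp (u * t) =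
      ((δ : ℂ) ^ n)⁻¹ * exponentialIntegral (n + 1) (δ * u) := by
  have hδ0 : (δ : ℂ) ≠ 0 := ofReal_ne_zero.2 hδ.ne'
  have hscale := integral_comp_mul_left_Ioi'
    (fun t : ℝ => ((t : ℂ) ^ (n + 1))⁻¹ * cexp (u * t)) 1 hδ
  rw [mul_one, real_smul, ← integral_const_mul] at hscale
  rw [← hscale, exponentialIntegral, ← integral_const_mul]
  congr 1 with t
  rw [ofReal_mul, mul_pow, mul_inv, pow_succ (δ : ℂ), mul_left_comm u, mul_assoc (δ : ℂ)]
  field_simp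

theorem exponentialIntegral_one_neg_ofReal {x : ℝ} (hx : 0 < x) :
    exponentialIntegral 1 (-x) = ((∫ t in Ioi x, t⁻¹ * Real.exp (-t) : ℝ) : ℂ) := by
  have hscale := integral_Ioi_inv_pow_mul_cexp 0 hx (-1)
  rw [pow_zero, inv_one, one_mul, mul_neg_one] at hscale
  rw [← hscale, ← integral_complex_ofReal]
  simp

theorem tendsto_exponentialIntegral_one_add_log :
    Tendsto (fun x : ℝ => exponentialIntegral 1 (-x) + Complex.log x) (𝓝[>] 0) (𝓝 (-γ)) := by
  have hlim := (continuous_ofReal.tendsto _).comp tendsto_integral_Ioi_inv_mul_exp_neg_add_log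
  rw [ofReal_neg] at hlim
  refine hlim.congr' ?_
  filter_upwards [self_mem_nhdsWithin] with x (hx : 0 < x)
  rw [Function.comp_apply, exponentialIntegral_one_neg_ofReal hx, ← ofReal_log hx.le, ofReal_add]

/-- The exponential generating function `∑ c_k z^k / k!` of a sequence `c`; it is only used for
bounded sequences, for which the series is entire. -/
def expGenFun (c : ℕ → ℂ) (z : ℂ) : ℂ := ∑' k : ℕ, c k * z ^ k / (k ! : ℂ)

theorem norm_mul_pow_div_factorial_le {c z : ℂ} {C R : ℝ} (hc : ‖c‖ ≤ C) (hz : ‖z‖ ≤ R) (k : ℕ) :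
    ‖c * z ^ k / (k ! : ℂ)‖ ≤ C * (R ^ k / (k ! : ℝ)) := by
  have hC : 0 ≤ C := (norm_nonneg c).trans hc
  rw [norm_div, norm_mul, norm_pow, norm_natCast, mul_div_assoc]
  gcongr

theorem hasDerivAt_mul_pow_succ_div_factorial (c : ℂ) (k : ℕ) (z : ℂ) :
    HasDerivAt (fun z => c * z ^ (k + 1) / ((k + 1)! : ℂ)) (c * z ^ k / (k ! : ℂ)) z := by
  refine (((hasDerivAt_pow (k + 1) z).const_mul c).div_const _).congr_deriv ?_
  rw [Nat.factorial_succ, Nat.cast_mul, add_tsub_cancel_right]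
  have hsucc : ((k + 1 : ℕ) : ℂ) ≠ 0 := Nat.cast_ne_zero.2 k.succ_ne_zero
  field_simp

section expGenFun

variable {c : ℕ → ℂ} {C : ℝ}

theorem summable_expGenFun (hc : ∀ k, ‖c k‖ ≤ C) (z : ℂ) :
    Summable fun k : ℕ => c k * z ^ k / (k ! : ℂ) :=
  .of_norm_bounded ((Real.summable_pow_div_factorial ‖z‖).mul_left C)
    fun k => norm_mul_pow_div_factorial_le (hc k) le_rfl k

theorem expGenFun_apply_zero (c : ℕ → ℂ) : expGenFun c 0 = c 0 := by
  rw [expGenFun, tsum_eq_single 0 fun k hk => by simp [hk]]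
  simp

theorem expGenFun_eq_zero_add (hc : ∀ k, ‖c k‖ ≤ C) (z : ℂ) :
    expGenFun c z = c 0 + ∑' k : ℕ, c (k + 1) * z ^ (k + 1) / ((k + 1)! : ℂ) := by
  rw [expGenFun, (summable_expGenFun hc z).tsum_eq_zero_add]
  simp

theorem hasDerivAt_expGenFun (hc : ∀ k, ‖c k‖ ≤ C) (z : ℂ) :
    HasDerivAt (expGenFun c) (expGenFun (fun k => c (k + 1)) z) z := by
  have hz : z ∈ Metric.ball (0 : ℂ) (‖z‖ + 1) := by simp
  have htail : HasDerivAt (fun y => ∑' k : ℕ, c (k + 1) * y ^ (k + 1) / ((k + 1)! : ℂ))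
      (∑' k : ℕ, c (k + 1) * z ^ k / (k ! : ℂ)) z :=
    hasDerivAt_tsum_of_isPreconnected
      ((Real.summable_pow_div_factorial (‖z‖ + 1)).mul_left C) Metric.isOpen_ball
      (convex_ball _ _).isPreconnected
      (fun k y _ => hasDerivAt_mul_pow_succ_div_factorial (c (k + 1)) k y)
      (fun k y hy => norm_mul_pow_div_factorial_le (hc (k + 1)) (mem_ball_zero_iff.1 hy).le k) hz
      ((summable_nat_add_iff 1).2 (summable_expGenFun hc z)) hz
  rw [funext (expGenFun_eq_zero_add hc)]
  exact htail.const_add (c 0)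

end expGenFun

/-- The entire function `∑_{k ≠ h} z^k / (k! (k - h))`, which is the single-valued part of
`E_{h+1}(-z)`. The term `k = h` is dropped by the convention `0⁻¹ = 0`. -/
def expIntegralSeries (h : ℕ) : ℂ → ℂ := expGenFun fun k => ((k : ℂ) - h)⁻¹

theorem norm_inv_natCast_sub_natCast_le_one (k h : ℕ) : ‖((k : ℂ) - h)⁻¹‖ ≤ 1 := by
  rcases eq_or_ne k h with rfl | hkh
  · simp
  · rw [norm_inv]
    refine inv_le_one_of_one_le₀ ?_
    have hint : (1 : ℤ) ≤ |(k : ℤ) - h| :=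
      Int.one_le_abs (sub_ne_zero.2 (Nat.cast_injective.ne hkh))
    calc (1 : ℝ) ≤ |((k - h : ℤ) : ℝ)| := by exact_mod_cast hint
      _ = ‖(k : ℂ) - h‖ := by rw [← norm_intCast, Int.cast_sub, Int.cast_natCast, Int.cast_natCast]

theorem expIntegralSeries_apply_zero (h : ℕ) : expIntegralSeries h 0 = -(h : ℂ)⁻¹ := by
  rw [expIntegralSeries, expGenFun_apply_zero, Nat.cast_zero, zero_sub, inv_neg]

theorem hasDerivAt_expIntegralSeries_succ (h : ℕ) (z : ℂ) :
    HasDerivAt (expIntegralSeries (h + 1)) (expIntegralSeries h z) z := by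
  refine (hasDerivAt_expGenFun (fun k => norm_inv_natCast_sub_natCast_le_one k (h + 1))
    z).congr_deriv ?_
  simp only [expIntegralSeries, Nat.cast_add, Nat.cast_one, add_sub_add_right_eq_sub]

theorem expGenFun_inv_add_one {z : ℂ} (hz : z ≠ 0) :
    expGenFun (fun k => ((k : ℂ) + 1)⁻¹) z = (cexp z - 1) / z := by
  have hexp : HasSum (fun k : ℕ => z ^ k / (k ! : ℂ)) (cexp z) := by
    rw [Complex.exp_eq_exp_ℂ]
    exact NormedSpace.expSeries_div_hasSum_exp z
  have htail := ((hasSum_nat_add_iff' 1).2 hexp).div_const z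
  simp only [Finset.range_one, Finset.sum_singleton, pow_zero, Nat.factorial_zero, Nat.cast_one,
    div_one] at htail
  rw [← htail.tsum_eq, expGenFun]
  refine tsum_congr fun k => ?_
  rw [Nat.factorial_succ]
  push_cast
  field_simp
  ring

theorem hasDerivAt_expIntegralSeries_zero {z : ℂ} (hz : z ≠ 0) :
    HasDerivAt (expIntegralSeries 0) ((cexp z - 1) / z) z := by
  refine (hasDerivAt_expGenFun (fun k => norm_inv_natCast_sub_natCast_le_one k 0) z).congr_deriv ?_
  rw [← expGenFun_inv_add_one hz]
  simp only [Nat.cast_add, Nat.cast_one, Nat.cast_zero, sub_zero]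

theorem continuous_expIntegralSeries (h : ℕ) : Continuous (expIntegralSeries h) :=
  continuous_iff_continuousAt.2 fun z =>
    (hasDerivAt_expGenFun (fun k => norm_inv_natCast_sub_natCast_le_one k h) z).continuousAt

theorem summable_norm_pow_div_mul_factorial (h : ℕ) (z : ℂ) :
    Summable fun k : ℕ => ‖z ^ k / (((k : ℂ) + 1) * ((k + h + 1)! : ℂ))‖ := by
  refine .of_nonneg_of_le (fun k => norm_nonneg _) (fun k => ?_)
    (Real.summable_pow_div_factorial ‖z‖)
  have hfact : (k ! : ℝ) ≤ ((k + h + 1)! : ℝ) := by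
    exact_mod_cast Nat.factorial_le (by omega)
  rw [norm_div, norm_pow, norm_mul, norm_natCast, ← Nat.cast_add_one, norm_natCast]
  gcongr
  calc (k ! : ℝ) ≤ ((k + h + 1)! : ℝ) := hfact
    _ ≤ ((k + 1 : ℕ) : ℝ) * ((k + h + 1)! : ℝ) :=
      le_mul_of_one_le_left (by positivity) (by exact_mod_cast Nat.le_add_left 1 k)

theorem expIntegralSeries_eq_sum_add_tsum (h : ℕ) (z : ℂ) :
    expIntegralSeries h z = -(∑ k ∈ Finset.range h, z ^ k / (k ! : ℂ) / ((h : ℂ) - k)) +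
      z ^ (h + 1) * ∑' k : ℕ, z ^ k / (((k : ℂ) + 1) * ((k + h + 1)! : ℂ)) := by
  have hsplit := (summable_expGenFun
    (fun k => norm_inv_natCast_sub_natCast_le_one k h) z).sum_add_tsum_nat_add (h + 1)
  rw [expIntegralSeries, expGenFun, ← hsplit, Finset.sum_range_succ, sub_self, inv_zero, zero_mul,
    zero_div, add_zero, ← Finset.sum_neg_distrib, ← tsum_mul_left]
  congr 1
  · refine Finset.sum_congr rfl fun k _ => ?_
    rw [← neg_sub (h : ℂ) k, inv_neg]
    ring
  · refine tsum_congr fun k => ?_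
    have hsub : ((k + (h + 1) : ℕ) : ℂ) - h = k + 1 := by push_cast; ring
    rw [hsub, ← add_assoc k h 1]
    field_simp
    ring

/-- The `h`-fold primitive of `-γ - log (-u)` on `Re u < 0` that vanishes at the origin for
`h ≥ 1`; it is the logarithmic part of `E_{h+1}(-u)`. -/
def logPrimitive (h : ℕ) (u : ℂ) : ℂ :=
  u ^ h / (h ! : ℂ) * (∑ j ∈ Finset.Icc 1 h, (j : ℂ)⁻¹ - γ - Complex.log (-u))

theorem neg_mem_slitPlane {u : ℂ} (hu : u.re ≤ 0) (hu0 : u ≠ 0) : -u ∈ slitPlane := by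
  rw [mem_slitPlane_iff, neg_re, neg_im, neg_pos, neg_ne_zero]
  by_contra! h
  exact hu0 (Complex.ext (le_antisymm hu h.1) h.2)

theorem ne_zero_of_re_neg {u : ℂ} (hu : u.re < 0) : u ≠ 0 := by
  rintro rfl
  exact hu.ne zero_re

theorem hasDerivAt_log_neg {u : ℂ} (hu : u.re < 0) :
    HasDerivAt (fun u => Complex.log (-u)) u⁻¹ u :=
  ((hasDerivAt_neg u).clog (neg_mem_slitPlane hu.le (ne_zero_of_re_neg hu))).congr_deriv
    (by rw [neg_div_neg_eq, one_div])

theorem hasDerivAt_logPrimitive_zero {u : ℂ} (hu : u.re < 0) :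
    HasDerivAt (logPrimitive 0) (-u⁻¹) u := by
  have hzero : logPrimitive 0 = fun u => -γ - Complex.log (-u) := by
    ext u
    simp [logPrimitive]
  rw [hzero]
  exact (hasDerivAt_log_neg hu).const_sub _

theorem hasDerivAt_logPrimitive_succ (h : ℕ) {u : ℂ} (hu : u.re < 0) :
    HasDerivAt (logPrimitive (h + 1)) (logPrimitive h u) u := by
  have hu0 : u ≠ 0 := ne_zero_of_re_neg hu
  have hfact : (h ! : ℂ) ≠ 0 := Nat.cast_ne_zero.2 h.factorial_ne_zero
  have hsucc : (h : ℂ) + 1 ≠ 0 := h.cast_add_one_ne_zero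
  refine (((hasDerivAt_pow (h + 1) u).div_const _).fun_mul
    ((hasDerivAt_log_neg hu).const_sub _)).congr_deriv ?_
  rw [logPrimitive, Finset.sum_Icc_succ_top (by omega), Nat.factorial_succ, add_tsub_cancel_right]
  push_cast
  field_simp
  ring

theorem continuousAt_mul_log_zero : ContinuousAt (fun z => z * Complex.log z) 0 := by
  have hbound : Tendsto (fun z : ℂ => |‖z‖ * Real.log ‖z‖| + ‖z‖ * Real.pi) (𝓝 0) (𝓝 0) := by
    have hcont : Continuous fun z : ℂ => |‖z‖ * Real.log ‖z‖| + ‖z‖ * Real.pi :=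
      (Real.continuous_mul_log.comp continuous_norm).abs.add (by fun_prop)
    simpa using hcont.tendsto 0
  rw [ContinuousAt, zero_mul]
  refine squeeze_zero_norm (fun z => ?_) hbound
  calc ‖z * Complex.log z‖ ≤ ‖z‖ * (|Real.log ‖z‖| + |z.arg|) := by
        rw [norm_mul, ← log_re, ← log_im]
        gcongr
        exact norm_le_abs_re_add_abs_im _
    _ ≤ ‖z‖ * (|Real.log ‖z‖| + Real.pi) := by gcongr; exact abs_arg_le_pi z
    _ = |‖z‖ * Real.log ‖z‖| + ‖z‖ * Real.pi := by rw [mul_add, abs_mul, abs_norm]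

theorem continuousAt_mul_log_neg {u : ℂ} (hu : u.re ≤ 0) :
    ContinuousAt (fun u => u * Complex.log (-u)) u := by
  rcases eq_or_ne u 0 with rfl | hu0
  · have hneg := (continuousAt_mul_log_zero.comp_of_eq continuousAt_neg neg_zero).neg
    simpa [Function.comp_def, Pi.neg_def] using hneg
  · exact continuousAt_id.mul (continuousAt_neg.clog (neg_mem_slitPlane hu hu0))

theorem continuousOn_logPrimitive_succ (h : ℕ) :
    ContinuousOn (logPrimitive (h + 1)) {u | u.re ≤ 0} := by
  have hfactor : logPrimitive (h + 1) = fun u => u ^ h / ((h + 1)! : ℂ) *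
      (u * (∑ j ∈ Finset.Icc 1 (h + 1), (j : ℂ)⁻¹ - γ) - u * Complex.log (-u)) := by
    ext u
    rw [logPrimitive]
    ring
  rw [hfactor]
  have hlog : ContinuousOn (fun u => u * Complex.log (-u)) {u | u.re ≤ 0} := fun u hu =>
    (continuousAt_mul_log_neg hu).continuousWithinAt
  fun_prop

theorem eqOn_const_of_hasDerivAt_zero_of_tendsto {𝕜 E : Type*} [RCLike 𝕜] [NormedAddCommGroup E]
    [NormedSpace 𝕜 E] {s : Set 𝕜} (hs : IsOpen s) (hs' : IsPreconnected s) {f : 𝕜 → E}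
    (hf : ∀ z ∈ s, HasDerivAt f 0 z) {l : Filter 𝕜} [l.NeBot] (hl : s ∈ l) {c : E}
    (hlim : Tendsto f l (𝓝 c)) : EqOn f (fun _ => c) s := by
  obtain ⟨a, ha⟩ := hs.exists_is_const_of_deriv_eq_zero hs'
    (fun z hz => (hf z hz).differentiableAt.differentiableWithinAt) (fun z hz => (hf z hz).deriv)
  have hac : a = c := tendsto_nhds_unique
    (tendsto_const_nhds.congr' (mem_of_superset hl fun z hz => (ha z hz).symm)) hlim
  exact fun z hz => (ha z hz).trans hac

/-- The difference of the two sides of the expansion of `E_{h+1}(-u)` into its logarithmic part and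
an entire function, cf. DLMF 8.19.8. -/
def expIntegralDefect (h : ℕ) (u : ℂ) : ℂ :=
  exponentialIntegral (h + 1) u - logPrimitive h u + expIntegralSeries h u

theorem hasDerivAt_expIntegralDefect_zero {u : ℂ} (hu : u.re < 0) :
    HasDerivAt (expIntegralDefect 0) 0 u := by
  have hu0 : u ≠ 0 := ne_zero_of_re_neg hu
  refine (((hasDerivAt_exponentialIntegral 0 hu).sub (hasDerivAt_logPrimitive_zero hu)).add
    (hasDerivAt_expIntegralSeries_zero hu0)).congr_deriv ?_
  rw [exponentialIntegral_zero hu]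
  field_simp
  ring

theorem hasDerivAt_expIntegralDefect_succ (h : ℕ) {u : ℂ} (hu : u.re < 0) :
    HasDerivAt (expIntegralDefect (h + 1)) (expIntegralDefect h u) u :=
  ((hasDerivAt_exponentialIntegral (h + 1) hu).sub (hasDerivAt_logPrimitive_succ h hu)).add
    (hasDerivAt_expIntegralSeries_succ h u)

theorem tendsto_neg_ofReal_nhdsGT :
    Tendsto (fun x : ℝ => -(x : ℂ)) (𝓝[>] 0) (𝓝 0) := by
  have hcont : Continuous fun x : ℝ => -(x : ℂ) := by fun_prop
  simpa using (hcont.tendsto 0).mono_left nhdsWithin_le_nhds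

theorem tendsto_expIntegralDefect_zero :
    Tendsto (fun x : ℝ => expIntegralDefect 0 (-x)) (𝓝[>] 0) (𝓝 0) := by
  have hseries := ((continuous_expIntegralSeries 0).tendsto 0).comp tendsto_neg_ofReal_nhdsGT
  have hlim := (tendsto_exponentialIntegral_one_add_log.add_const (γ : ℂ)).add hseries
  rw [expIntegralSeries_apply_zero, Nat.cast_zero, inv_zero, neg_zero, add_zero,
    neg_add_cancel] at hlim
  refine hlim.congr fun x => ?_
  simp only [expIntegralDefect, logPrimitive, Function.comp_apply, neg_neg, pow_zero,
    Nat.factorial_zero, Nat.cast_one, div_one, one_mul, zero_lt_one, Finset.Icc_eq_empty_of_lt,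
    Finset.sum_empty, zero_add]
  ring

theorem continuousOn_expIntegralDefect_succ (h : ℕ) :
    ContinuousOn (expIntegralDefect (h + 1)) {u | u.re ≤ 0} :=
  ((continuousOn_exponentialIntegral (by omega)).sub (continuousOn_logPrimitive_succ h)).add
    (continuous_expIntegralSeries (h + 1)).continuousOn

theorem expIntegralDefect_succ_apply_zero (h : ℕ) : expIntegralDefect (h + 1) 0 = 0 := by
  rw [expIntegralDefect, exponentialIntegral_add_two_apply_zero, expIntegralSeries_apply_zero,
    logPrimitive, zero_pow h.succ_ne_zero]
  push_cast
  ring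

theorem expIntegralDefect_eq_zero_of_re_neg (h : ℕ) :
    EqOn (expIntegralDefect h) (fun _ => 0) {u | u.re < 0} := by
  have hopen : IsOpen {u : ℂ | u.re < 0} := isOpen_lt continuous_re continuous_const
  have hconn : IsPreconnected {u : ℂ | u.re < 0} := (convex_halfSpace_re_lt 0).isPreconnected
  induction h with
  | zero =>
    refine eqOn_const_of_hasDerivAt_zero_of_tendsto hopen hconn
      (fun u hu => hasDerivAt_expIntegralDefect_zero hu) (l := map (fun x : ℝ => -(x : ℂ)) (𝓝[>] 0))
      ?_ (tendsto_map'_iff.2 tendsto_expIntegralDefect_zero)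
    rw [mem_map]
    filter_upwards [self_mem_nhdsWithin] with x (hx : 0 < x)
    simpa using hx
  | succ h ih =>
    have hneBot : (𝓝[{u : ℂ | u.re < 0}] 0).NeBot :=
      mem_closure_iff_nhdsWithin_neBot.1 (by simp)
    have hlim : Tendsto (expIntegralDefect (h + 1)) (𝓝[{u : ℂ | u.re < 0}] 0) (𝓝 0) := by
      have hcont := continuousOn_expIntegralDefect_succ h 0 (by simp)
      rw [ContinuousWithinAt, expIntegralDefect_succ_apply_zero] at hcont
      exact hcont.mono_left (nhdsWithin_mono 0 fun u (hu : u.re < 0) => hu.le)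
    exact eqOn_const_of_hasDerivAt_zero_of_tendsto hopen hconn
      (fun u hu => (hasDerivAt_expIntegralDefect_succ h hu).congr_deriv (ih hu))
      self_mem_nhdsWithin hlim

theorem expIntegralDefect_succ_eq_zero_of_re_nonpos (h : ℕ) :
    EqOn (expIntegralDefect (h + 1)) (fun _ => 0) {u | u.re ≤ 0} :=
  (expIntegralDefect_eq_zero_of_re_neg (h + 1)).of_subset_closure
    (continuousOn_expIntegralDefect_succ h) continuousOn_const (fun u (hu : u.re < 0) => hu.le)
    (closure_setOfPred_re_lt 0).ge

theorem exponentialIntegral_eq_logPrimitive_sub_expIntegralSeries {h : ℕ} {u : ℂ} (hu : u.re ≤ 0)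
    (hconv : 1 ≤ h ∨ u.re < 0) :
    exponentialIntegral (h + 1) u = logPrimitive h u - expIntegralSeries h u := by
  have hdefect : expIntegralDefect h u = 0 := by
    rcases hconv with hh | hneg
    · obtain ⟨h, rfl⟩ := Nat.exists_eq_succ_of_ne_zero (Nat.one_le_iff_ne_zero.1 hh)
      exact expIntegralDefect_succ_eq_zero_of_re_nonpos h hu
    · exact expIntegralDefect_eq_zero_of_re_neg h hneg
  rw [expIntegralDefect] at hdefect
  linear_combination hdefect

theorem inv_pow_mul_logPrimitive (h : ℕ) {δ : ℝ} (hδ : 0 < δ) {u : ℂ} (hu : u ≠ 0) :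
    ((δ : ℂ) ^ h)⁻¹ * logPrimitive h (δ * u) = u ^ h / (h ! : ℂ) *
      (∑ j ∈ Finset.Icc 1 h, (j : ℂ)⁻¹ - γ - Real.log δ - Complex.log (-u)) := by
  have hδ0 : (δ : ℂ) ≠ 0 := ofReal_ne_zero.2 hδ.ne'
  rw [logPrimitive, ← mul_neg, log_ofReal_mul hδ (neg_ne_zero.2 hu), mul_pow]
  field_simp
  ring

theorem inv_pow_mul_expIntegralSeries (h : ℕ) {δ : ℂ} (hδ : δ ≠ 0) (u : ℂ) :
    (δ ^ h)⁻¹ * expIntegralSeries h (δ * u) =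
      -(∑ k ∈ Finset.range h, u ^ k / (k ! : ℂ) * (δ ^ ((k : ℤ) - h) / ((h : ℂ) - k))) +
        δ * u ^ (h + 1) * ∑' k : ℕ, (δ * u) ^ k / (((k : ℂ) + 1) * ((k + h + 1)! : ℂ)) := by
  rw [expIntegralSeries_eq_sum_add_tsum, mul_add, mul_neg, Finset.mul_sum, ← mul_assoc]
  congr 2
  · refine Finset.sum_congr rfl fun k _ => ?_
    rw [zpow_sub₀ hδ, zpow_natCast, zpow_natCast, mul_pow]
    ring
  · rw [mul_pow, pow_succ δ]
    field_simp

end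

theorem renormalized_oscillatory_integral_identity_general
    (h : ℕ) {δ : ℝ} (hδ : 0 < δ) {w : ℂ} (hw : w ≠ 0) (hw_im : 0 ≤ w.im)
    (hconv : 1 ≤ h ∨ 0 < w.im) :
    IntegrableOn
      (fun r : ℝ => ((r : ℂ) ^ (h + 1))⁻¹ * Complex.exp (Complex.I * w * r))
      (Set.Ioi δ) ∧
    Summable (fun k : ℕ =>
      ‖((δ : ℂ) * Complex.I * w) ^ k /
        (((k : ℂ) + 1) * ((k + h + 1).factorial : ℂ))‖) ∧
    ((h.factorial : ℂ))⁻¹ * (Complex.I * w) ^ h *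
        (-Complex.log (-(Complex.I * w)) + ∑ j ∈ Finset.Icc 1 h, ((j : ℂ))⁻¹) =
      (∫ r in Set.Ioi δ, ((r : ℂ) ^ (h + 1))⁻¹ * Complex.exp (Complex.I * w * r)) +
        (Complex.I ^ h / (h.factorial : ℂ)) * w ^ h *
          ((Real.eulerMascheroniConstant : ℂ) + (Real.log δ : ℂ)) -
        (∑ k ∈ Finset.range h,
          (Complex.I ^ k / (k.factorial : ℂ)) * w ^ k *
            ((δ : ℂ) ^ ((k : ℤ) - (h : ℤ)) / ((h : ℂ) - (k : ℂ)))) +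
        (δ : ℂ) * (Complex.I * w) ^ (h + 1) *
          ∑' k : ℕ, ((δ : ℂ) * Complex.I * w) ^ k /
            (((k : ℂ) + 1) * ((k + h + 1).factorial : ℂ)) := by
  have hu : (I * w).re ≤ 0 := by simpa using hw_im
  have hconv_left : 1 ≤ h ∨ (I * w).re < 0 := by simpa using hconv
  refine ⟨hconv_left.elim
      (fun hh => integrableOn_inv_pow_mul_cexp_of_re_nonpos (by omega) hδ hu)
      (integrableOn_inv_pow_mul_cexp_of_re_neg (h + 1) hδ),
    summable_norm_pow_div_mul_factorial h _, ?_⟩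
  have hu_scaled : (δ * (I * w)).re ≤ 0 := by
    rw [re_ofReal_mul]
    exact mul_nonpos_of_nonneg_of_nonpos hδ.le hu
  have hconv_scaled : 1 ≤ h ∨ (δ * (I * w)).re < 0 := by
    rw [re_ofReal_mul]
    exact hconv_left.imp_right (mul_neg_of_pos_of_neg hδ)
  have hpow (k : ℕ) : I ^ k / (k.factorial : ℂ) * w ^ k = (I * w) ^ k / (k.factorial : ℂ) := by
    rw [mul_pow, div_mul_eq_mul_div]
  simp only [hpow, mul_assoc (δ : ℂ) I w]
  rw [integral_Ioi_inv_pow_mul_cexp h hδ,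
    exponentialIntegral_eq_logPrimitive_sub_expIntegralSeries hu_scaled hconv_scaled, mul_sub,
    inv_pow_mul_logPrimitive h hδ (mul_ne_zero I_ne_zero hw),
    inv_pow_mul_expIntegralSeries h (ofReal_ne_zero.2 hδ.ne')]
  ring

/-- Renormalized oscillatory integral identity for the
Morrey kernels `J_{-h-1}`. -/
theorem renormalized_oscillatory_integral_identity
    (h : ℕ) (hh : 1 ≤ h) (δ : ℝ) (hδ : 0 < δ) (w : ℝ) (hw : w ≠ 0) :
    IntegrableOn
      (fun r : ℝ => ((r : ℂ) ^ (h + 1))⁻¹ * Complex.exp (Complex.I * w * r))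
      (Set.Ioi δ) ∧
    Summable (fun k : ℕ =>
      ‖((δ : ℂ) * Complex.I * w) ^ k /
        (((k : ℂ) + 1) * ((k + h + 1).factorial : ℂ))‖) ∧
    ((h.factorial : ℂ))⁻¹ * (Complex.I * w) ^ h *
        (-Complex.log (-(Complex.I * w)) + ∑ j ∈ Finset.Icc 1 h, ((j : ℂ))⁻¹) =
      (∫ r in Set.Ioi δ, ((r : ℂ) ^ (h + 1))⁻¹ * Complex.exp (Complex.I * w * r)) +
        (Complex.I ^ h / (h.factorial : ℂ)) * (w : ℂ) ^ h *
          ((Real.eulerMascheroniConstant : ℂ) + (Real.log δ : ℂ)) -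
        (∑ k ∈ Finset.range h,
          (Complex.I ^ k / (k.factorial : ℂ)) * (w : ℂ) ^ k *
            ((δ : ℂ) ^ ((k : ℤ) - (h : ℤ)) / ((h : ℂ) - (k : ℂ)))) +
        (δ : ℂ) * (Complex.I * w) ^ (h + 1) *
          ∑' k : ℕ, ((δ : ℂ) * Complex.I * w) ^ k /
            (((k : ℂ) + 1) * ((k + h + 1).factorial : ℂ)) :=
  renormalized_oscillatory_integral_identity_general h hδ (ofReal_ne_zero.2 hw) (by simp)
    (.inl hh)
end
end
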